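/- arXiv:0710.5419 — 4 statements merged into one kernel-verified Lean document; each statement's English description precedes it below -/
import Mathlib

section
/- The series identity ∑_{k=1}^∞ 2^{2k−2} ((k−1)!)² / ((2k)! · k) = (π² ln 2)/4 − (7/8) ζ(3) holds, where ζ(3) = ∑_{n=1}^∞ 1/n³ is Apéry's constant. -/
open Real

open Filter Topology MeasureTheory
open Finset (range)
open scoped Nat

/-!
Both sides equal `∫₀^{π/2} t² cot t dt`.

* With `Wₙ = (2n)‼ / (2n+1)‼` one has `t² = ∑ Wₙ / (n+1) · sin t ^ (2n+2)` for `|t| < π/2`: two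
  differentiations collapse the `N`-th remainder to the single term `2 (2N+1) W_N sin t ^ (2N)`.
  Multiplying by `cot t` and integrating termwise yields the series.
* Subtracting the partial sums of the formal expansion `cot t ~ 2 ∑ sin (2kt)` from `cot t` leaves
  `cos ((2n+1)t) / sin t`, whose integral against `t²` vanishes in the limit by Riemann–Lebesgue.
  The integrals `∫₀^{π/2} t² sin (2kt) dt` are elementary and sum to the closed form.
-/

section WallisRatio

/-- The ratio `(2n)‼ / (2n+1)‼` of double factorials, i.e. the Wallis integral
`∫₀^{π/2} sin t ^ (2n+1) dt`. -/
noncomputable def wallisRatio (n : ℕ) : ℝ := (2 * n)‼ / (2 * n + 1)‼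

lemma wallisRatio_zero : wallisRatio 0 = 1 := by
  simp [wallisRatio]

lemma wallisRatio_succ_mul (n : ℕ) :
    wallisRatio (n + 1) * (2 * n + 3) = wallisRatio n * (2 * n + 2) := by
  have := Nat.doubleFactorial_pos (2 * n + 1)
  rw [wallisRatio, wallisRatio, show 2 * (n + 1) = 2 * n + 2 by ring,
    show 2 * n + 2 + 1 = 2 * n + 1 + 2 by ring, Nat.doubleFactorial_add_two,
    Nat.doubleFactorial_add_two]
  push_cast
  field_simp
  ring

lemma wallisRatio_nonneg (n : ℕ) : 0 ≤ wallisRatio n := by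
  unfold wallisRatio
  positivity

lemma wallisRatio_le_one (n : ℕ) : wallisRatio n ≤ 1 := by
  induction n with
  | zero => exact wallisRatio_zero.le
  | succ n ih => nlinarith [wallisRatio_succ_mul n, (n.cast_nonneg : (0 : ℝ) ≤ n)]

lemma wallisRatio_eq_factorial (n : ℕ) :
    wallisRatio n = 2 ^ (2 * n) * (n ! : ℝ) ^ 2 / (2 * n + 1)! := by
  have := Nat.doubleFactorial_pos (2 * n)
  rw [wallisRatio, Nat.factorial_eq_mul_doubleFactorial, Nat.cast_mul,
    ← mul_div_mul_right _ _ (Nat.cast_ne_zero.2 this.ne' : ((2 * n)‼ : ℝ) ≠ 0),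
    Nat.doubleFactorial_two_mul]
  push_cast
  ring

lemma two_pow_mul_factorial_sq_div_eq_wallisRatio (n : ℕ) :
    (2 : ℝ) ^ (2 * n) * (n ! : ℝ) ^ 2 / ((2 * (n + 1))! * (n + 1)) =
      wallisRatio n / (n + 1) * (1 / (2 * n + 2)) := by
  have := Nat.factorial_pos (2 * n + 1)
  rw [wallisRatio_eq_factorial, show 2 * (n + 1) = 2 * n + 1 + 1 by ring, Nat.factorial_succ]
  push_cast
  field_simp
  ring

end WallisRatio

section SinPowSeries

lemma hasDerivAt_sin_pow_succ (n : ℕ) (t : ℝ) :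
    HasDerivAt (fun x ↦ sin x ^ (n + 1)) ((n + 1) * (sin t ^ n * cos t)) t := by
  simpa [mul_assoc] using (hasDerivAt_sin t).fun_pow (n + 1)

lemma hasDerivAt_sin_pow_succ_mul_cos (n : ℕ) (t : ℝ) :
    HasDerivAt (fun x ↦ sin x ^ (n + 1) * cos x)
      ((n + 1) * sin t ^ n - (n + 2) * sin t ^ (n + 2)) t := by
  refine ((hasDerivAt_sin_pow_succ n t).fun_mul (hasDerivAt_cos t)).congr_deriv ?_
  linear_combination ((n + 1) * sin t ^ n) * cos_sq' t

lemma hasDerivAt_sum_wallisRatio_mul_sin_pow_mul_cos (N : ℕ) (t : ℝ) :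
    HasDerivAt (fun x ↦ ∑ n ∈ range N, wallisRatio n * (sin x ^ (2 * n + 1) * cos x))
      (1 - (2 * N + 1) * wallisRatio N * sin t ^ (2 * N)) t := by
  induction N with
  | zero => simpa [wallisRatio_zero] using hasDerivAt_const t (0 : ℝ)
  | succ N ih =>
    simp only [Finset.sum_range_succ]
    refine (ih.fun_add ((hasDerivAt_sin_pow_succ_mul_cos (2 * N) t).const_mul _)).congr_deriv ?_
    push_cast
    linear_combination sin t ^ (2 * N + 2) * wallisRatio_succ_mul N

lemma hasDerivAt_sum_wallisRatio_mul_sin_pow (N : ℕ) (t : ℝ) :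
    HasDerivAt (fun x ↦ ∑ n ∈ range N, wallisRatio n / (n + 1) * sin x ^ (2 * n + 2))
      (2 * ∑ n ∈ range N, wallisRatio n * (sin t ^ (2 * n + 1) * cos t)) t := by
  rw [Finset.mul_sum]
  refine HasDerivAt.fun_sum fun n _ ↦ ?_
  refine ((hasDerivAt_sin_pow_succ (2 * n + 1) t).const_mul _).congr_deriv ?_
  push_cast
  field_simp
  ring

lemma abs_le_mul_of_abs_deriv_le {f f' : ℝ → ℝ} {C t : ℝ} (hf : ∀ s, HasDerivAt f (f' s) s)
    (h0 : f 0 = 0) (hC : ∀ s, |s| ≤ |t| → |f' s| ≤ C) : |f t| ≤ C * |t| := by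
  have h := (convex_closedBall (0 : ℝ) |t|).norm_image_sub_le_of_norm_hasDerivWithin_le
    (fun s _ ↦ (hf s).hasDerivWithinAt) (fun s hs ↦ hC s (by simpa using hs))
    (Metric.mem_closedBall_self (abs_nonneg t)) (by simp : t ∈ Metric.closedBall 0 |t|)
  simpa [h0] using h

lemma abs_sin_le_abs_sin {s t : ℝ} (hst : |s| ≤ |t|) (ht : |t| ≤ π / 2) : |sin s| ≤ |sin t| := by
  rw [abs_sin_eq_sin_abs_of_abs_le_pi (by linarith [pi_pos]),
    abs_sin_eq_sin_abs_of_abs_le_pi (by linarith [pi_pos])]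
  exact sin_le_sin_of_le_of_le_pi_div_two (by linarith [abs_nonneg s, pi_pos]) ht hst

lemma abs_sub_sum_wallisRatio_mul_sin_pow_mul_cos_le (N : ℕ) {t : ℝ} (ht : |t| ≤ π / 2) :
    |t - ∑ n ∈ range N, wallisRatio n * (sin t ^ (2 * n + 1) * cos t)| ≤
      (2 * N + 1) * (sin t ^ 2) ^ N * |t| := by
  refine abs_le_mul_of_abs_deriv_le (fun s ↦ (hasDerivAt_id' s).fun_sub
    (hasDerivAt_sum_wallisRatio_mul_sin_pow_mul_cos N s)) (by simp) fun s hs ↦ ?_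
  have hW := wallisRatio_nonneg N
  have hsin : sin s ^ 2 ≤ sin t ^ 2 := sq_le_sq.2 (abs_sin_le_abs_sin hs ht)
  rw [sub_sub_cancel, pow_mul, abs_of_nonneg (by positivity)]
  calc (2 * N + 1) * wallisRatio N * (sin s ^ 2) ^ N
      ≤ (2 * N + 1) * 1 * (sin t ^ 2) ^ N := by gcongr; exact wallisRatio_le_one N
    _ = (2 * N + 1) * (sin t ^ 2) ^ N := by ring

lemma abs_sq_sub_sum_wallisRatio_mul_sin_pow_le (N : ℕ) {t : ℝ} (ht : |t| ≤ π / 2) :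
    |t ^ 2 - ∑ n ∈ range N, wallisRatio n / (n + 1) * sin t ^ (2 * n + 2)| ≤
      2 * ((2 * N + 1) * (sin t ^ 2) ^ N * |t|) * |t| := by
  have hderiv (s : ℝ) : HasDerivAt
      (fun x ↦ x ^ 2 - ∑ n ∈ range N, wallisRatio n / (n + 1) * sin x ^ (2 * n + 2))
      (2 * (s - ∑ n ∈ range N, wallisRatio n * (sin s ^ (2 * n + 1) * cos s))) s := by
    simpa [mul_sub] using
      (hasDerivAt_pow 2 s).fun_sub (hasDerivAt_sum_wallisRatio_mul_sin_pow N s)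
  refine abs_le_mul_of_abs_deriv_le hderiv (by simp) fun s hs ↦ ?_
  have hsin : sin s ^ 2 ≤ sin t ^ 2 := sq_le_sq.2 (abs_sin_le_abs_sin hs ht)
  calc |2 * (s - ∑ n ∈ range N, wallisRatio n * (sin s ^ (2 * n + 1) * cos s))|
      = 2 * |s - ∑ n ∈ range N, wallisRatio n * (sin s ^ (2 * n + 1) * cos s)| := by
        rw [abs_mul, abs_two]
    _ ≤ 2 * ((2 * N + 1) * (sin s ^ 2) ^ N * |s|) := by
        gcongr
        exact abs_sub_sum_wallisRatio_mul_sin_pow_mul_cos_le N (hs.trans ht)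
    _ ≤ 2 * ((2 * N + 1) * (sin t ^ 2) ^ N * |t|) := by gcongr

lemma hasSum_wallisRatio_mul_sin_pow {t : ℝ} (ht : |t| < π / 2) :
    HasSum (fun n : ℕ ↦ wallisRatio n / (n + 1) * sin t ^ (2 * n + 2)) (t ^ 2) := by
  have hnonneg (n : ℕ) : 0 ≤ wallisRatio n / (n + 1) * sin t ^ (2 * n + 2) := by
    have := wallisRatio_nonneg n
    have : 0 ≤ sin t ^ (2 * n + 2) := (even_two_mul (n + 1)).pow_nonneg _
    positivity
  have hsin : sin t ^ 2 < 1 := by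
    have := cos_pos_of_mem_Ioo (abs_lt.1 ht)
    rw [sin_sq]
    linarith [pow_pos this 2]
  have hlim : Tendsto (fun N : ℕ ↦ 2 * ((2 * N + 1) * (sin t ^ 2) ^ N * |t|) * |t|)
      atTop (𝓝 0) := by
    have h := ((tendsto_self_mul_const_pow_of_lt_one (sq_nonneg _) hsin).const_mul 2).add
      (tendsto_pow_atTop_nhds_zero_of_lt_one (sq_nonneg _) hsin)
    convert! ((h.mul_const |t|).const_mul 2).mul_const |t| using 2 <;> ring
  rw [hasSum_iff_tendsto_nat_of_nonneg hnonneg, tendsto_iff_norm_sub_tendsto_zero]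
  refine squeeze_zero (fun _ ↦ norm_nonneg _) (fun N ↦ ?_) hlim
  rw [norm_sub_rev]
  exact abs_sq_sub_sum_wallisRatio_mul_sin_pow_le N ht.le

/-- At `t = 0` the identity relies on the convention `cot 0 = 0`. -/
lemma hasSum_wallisRatio_mul_sin_pow_mul_cos {t : ℝ} (ht : |t| ≤ π / 2) :
    HasSum (fun n : ℕ ↦ wallisRatio n / (n + 1) * (sin t ^ (2 * n + 1) * cos t))
      (t ^ 2 * cot t) := by
  rw [cot_eq_cos_div_sin]
  rcases ht.eq_or_lt with h | h
  · have hcos : cos t = 0 := by rw [← cos_abs, h, cos_pi_div_two]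
    simp [hcos]
  rcases eq_or_ne (sin t) 0 with hsin | hsin
  · simp [hsin]
  · convert! (hasSum_wallisRatio_mul_sin_pow h).mul_right (cos t / sin t) using 2 with n
    field_simp
    ring

end SinPowSeries

section CotIntegral

lemma tendsto_integral_mul_cos_atTop {f : ℝ → ℝ} (hf : Integrable f) :
    Tendsto (fun w : ℝ ↦ ∫ t, f t * cos (w * t)) atTop (𝓝 0) := by
  have hfreq : Tendsto (fun w : ℝ ↦ w / (2 * π)) atTop (cocompact ℝ) :=
    (tendsto_id.atTop_div_const (by positivity)).mono_right atTop_le_cocompact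
  have hre := (Complex.continuous_re.tendsto 0).comp
    ((Real.tendsto_integral_exp_smul_cocompact fun t ↦ (f t : ℂ)).comp hfreq)
  refine hre.congr fun w ↦ ?_
  have hint : Integrable fun t ↦ fourierChar (-(t * (w / (2 * π)))) • (f t : ℂ) := by
    simpa [mul_comm] using (Real.fourierIntegral_convergent_iff (w / (2 * π))).2 hf.ofReal
  simp only [Function.comp_apply]
  rw [← Complex.reCLM_apply, ← Complex.reCLM.integral_comp_comm hint]
  refine integral_congr_ae (.of_forall fun t ↦ ?_)
  have harg : 2 * π * -(t * (w / (2 * π))) = -(w * t) := by field_simp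
  simp only [Complex.reCLM_apply, Circle.smul_def, fourierChar_apply, smul_eq_mul, harg,
    Complex.re_mul_ofReal, Complex.exp_ofReal_mul_I_re, cos_neg, mul_comm (f t)]

lemma tendsto_intervalIntegral_mul_cos_atTop {f : ℝ → ℝ} {a b : ℝ}
    (hf : IntervalIntegrable f volume a b) :
    Tendsto (fun w : ℝ ↦ ∫ t in a..b, f t * cos (w * t)) atTop (𝓝 0) := by
  have h := tendsto_integral_mul_cos_atTop
    ((integrable_indicator_iff measurableSet_uIoc).2 hf.def')
  have hmul (w t : ℝ) : (Set.uIoc a b).indicator f t * cos (w * t) =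
      (Set.uIoc a b).indicator (fun t ↦ f t * cos (w * t)) t :=
    (Set.indicator_mul_left _ f fun t ↦ cos (w * t)).symm
  simp only [hmul, integral_indicator measurableSet_uIoc] at h
  simpa [intervalIntegral.intervalIntegral_eq_integral_uIoc] using
    h.const_mul (if a ≤ b then (1 : ℝ) else -1)

lemma div_sin_mul_cos_sub_cos (x t : ℝ) (k : ℕ) :
    x / sin t * cos ((2 * k + 1) * t) - x / sin t * cos ((2 * (k + 1 : ℕ) + 1) * t) =
      2 * (x * sin (2 * (k + 1 : ℕ) * t)) := by
  have hsub : cos ((2 * k + 1) * t) = cos (2 * (k + 1 : ℕ) * t - t) := by push_cast; ring_nf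
  have hadd : cos ((2 * (k + 1 : ℕ) + 1) * t) = cos (2 * (k + 1 : ℕ) * t + t) := by ring_nf
  rw [hsub, hadd, cos_sub, cos_add]
  rcases eq_or_ne (sin t) 0 with hsin | hsin
  · obtain ⟨m, rfl⟩ := sin_eq_zero_iff.1 hsin
    have : sin (2 * (k + 1 : ℕ) * (m * π)) = 0 :=
      sin_eq_zero_iff.2 ⟨2 * (k + 1 : ℕ) * m, by push_cast; ring⟩
    rw [hsin, this]
    simp
  · field_simp
    ring

/-- Termwise integration of the (divergent) expansion `cot t ~ 2 ∑ sin (2kt)`. -/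
lemma tendsto_sum_integral_mul_sin_two_mul {f : ℝ → ℝ} {a b : ℝ}
    (hf : IntervalIntegrable (fun t ↦ f t / sin t) volume a b) :
    Tendsto (fun n ↦ ∑ k ∈ range n, 2 * ∫ t in a..b, f t * sin (2 * (k + 1 : ℕ) * t))
      atTop (𝓝 (∫ t in a..b, f t * cot t)) := by
  let J (k : ℕ) : ℝ := ∫ t in a..b, f t / sin t * cos ((2 * k + 1) * t)
  have hint (k : ℕ) : IntervalIntegrable (fun t ↦ f t / sin t * cos ((2 * k + 1) * t)) volume a b :=
    hf.mul_continuousOn (by fun_prop)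
  have hdiff (k : ℕ) : 2 * ∫ t in a..b, f t * sin (2 * (k + 1 : ℕ) * t) = J k - J (k + 1) := by
    rw [← intervalIntegral.integral_sub (hint k) (hint (k + 1)),
      ← intervalIntegral.integral_const_mul]
    simp only [div_sin_mul_cos_sub_cos]
  have hzero : J 0 = ∫ t in a..b, f t * cot t := by
    simp [J, cot_eq_cos_div_sin, div_mul_eq_mul_div, mul_div_assoc]
  have hfreq : Tendsto (fun n : ℕ ↦ 2 * (n : ℝ) + 1) atTop atTop :=
    tendsto_atTop_add_const_right _ _ (tendsto_natCast_atTop_atTop.const_mul_atTop two_pos)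
  have hJ : Tendsto J atTop (𝓝 0) := (tendsto_intervalIntegral_mul_cos_atTop hf).comp hfreq
  simp only [hdiff, Finset.sum_range_sub', ← hzero]
  simpa using hJ.const_sub (J 0)

end CotIntegral

section SpecialSums

lemma sum_range_two_mul_neg_one_pow_div (N : ℕ) :
    ∑ n ∈ range (2 * N), (-1 : ℝ) ^ n / (n + 1) = harmonic (2 * N) - harmonic N := by
  induction N with
  | zero => simp
  | succ N ih =>
    rw [show 2 * (N + 1) = 2 * N + 1 + 1 by ring, Finset.sum_range_succ, Finset.sum_range_succ, ih,
      harmonic_succ, harmonic_succ, harmonic_succ, pow_succ, (even_two_mul N).neg_one_pow]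
    push_cast
    field_simp
    ring

lemma tendsto_harmonic_two_mul_sub_harmonic :
    Tendsto (fun N : ℕ ↦ (harmonic (2 * N) - harmonic N : ℝ)) atTop (𝓝 (log 2)) := by
  have hγ := tendsto_harmonic_sub_log
  have hγ_two := hγ.comp (tendsto_id.const_mul_atTop' two_pos)
  have h := (hγ_two.sub hγ).add_const (log 2)
  rw [sub_self, zero_add] at h
  refine h.congr' ?_
  filter_upwards [eventually_ne_atTop 0] with N hN
  simp only [Function.comp_apply, id, Nat.cast_mul, Nat.cast_ofNat,
    log_mul two_ne_zero (Nat.cast_ne_zero.2 hN)]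
  ring

lemma tendsto_sum_neg_one_pow_div :
    Tendsto (fun N ↦ ∑ n ∈ range N, (-1 : ℝ) ^ n / (n + 1)) atTop (𝓝 (log 2)) := by
  have hanti : Antitone fun n : ℕ ↦ 1 / ((n : ℝ) + 1) := fun _ _ h ↦ by dsimp only; gcongr
  obtain ⟨l, hl⟩ :=
    hanti.tendsto_alternating_series_of_tendsto_zero tendsto_one_div_add_atTop_nhds_zero_nat
  simp only [mul_one_div] at hl
  have heven := hl.comp (tendsto_id.const_mul_atTop' two_pos)
  simp only [Function.comp_def, id, sum_range_two_mul_neg_one_pow_div] at heven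
  rwa [tendsto_nhds_unique heven tendsto_harmonic_two_mul_sub_harmonic] at hl

lemma summable_one_div_nat_add_one_pow {p : ℕ} (hp : 1 < p) :
    Summable fun n : ℕ ↦ 1 / ((n : ℝ) + 1) ^ p := by
  simpa using (summable_nat_add_iff 1).2 (summable_one_div_nat_pow.2 hp)

lemma hasSum_neg_one_pow_div_pow {p : ℕ} (hp : 1 < p) :
    HasSum (fun n : ℕ ↦ (-1 : ℝ) ^ n / (n + 1) ^ p)
      ((1 - 2 / 2 ^ p) * ∑' n : ℕ, 1 / ((n : ℝ) + 1) ^ p) := by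
  have hζ := (summable_one_div_nat_add_one_pow hp).hasSum
  have hdiff : HasSum (fun n : ℕ ↦ (1 - (-1 : ℝ) ^ n) / (n + 1) ^ p)
      (0 + 2 / 2 ^ p * ∑' n : ℕ, 1 / ((n : ℝ) + 1) ^ p) := by
    refine HasSum.even_add_odd (by simp) ?_
    convert! hζ.mul_left (2 / 2 ^ p) using 2 with n
    rw [(odd_two_mul_add_one n).neg_one_pow, div_mul_div_comm, ← mul_pow]
    push_cast
    ring
  convert! hζ.sub hdiff using 1
  · ext n
    ring
  · ring

end SpecialSums

section SqMulCot

lemma continuousOn_sq_div_sin : ContinuousOn (fun t ↦ t ^ 2 / sin t) (Set.Ioo (-π) π) := by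
  have heq (t : ℝ) : t ^ 2 / sin t = t / sinc t := by
    rcases eq_or_ne t 0 with rfl | h
    · simp
    · rw [sinc_of_ne_zero h, div_div_eq_mul_div, sq]
  simp only [heq]
  refine continuousOn_id.div continuous_sinc.continuousOn fun t ht ↦ ?_
  rcases eq_or_ne t 0 with rfl | h
  · simp
  · rw [sinc_of_ne_zero h]
    exact div_ne_zero (mt (sin_eq_zero_iff_of_lt_of_lt ht.1 ht.2).1 h) h

lemma intervalIntegrable_sq_div_sin {a b : ℝ} (ha : a ∈ Set.Ioo (-π) π)
    (hb : b ∈ Set.Ioo (-π) π) :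
    IntervalIntegrable (fun t ↦ t ^ 2 / sin t) volume a b :=
  (continuousOn_sq_div_sin.mono
    (Set.ordConnected_Ioo.uIcc_subset ha hb)).intervalIntegrable

lemma intervalIntegrable_sq_mul_cot {a b : ℝ} (ha : a ∈ Set.Ioo (-π) π)
    (hb : b ∈ Set.Ioo (-π) π) :
    IntervalIntegrable (fun t ↦ t ^ 2 * cot t) volume a b := by
  simpa only [cot_eq_cos_div_sin, div_mul_eq_mul_div, mul_div_assoc] using
    (intervalIntegrable_sq_div_sin ha hb).mul_continuousOn continuous_cos.continuousOn

lemma integral_sin_pow_mul_cos (n : ℕ) (a b : ℝ) :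
    ∫ t in a..b, sin t ^ n * cos t = (sin b ^ (n + 1) - sin a ^ (n + 1)) / (n + 1) := by
  simpa using integral_sin_pow_mul_cos_pow_odd (a := a) (b := b) n 0

lemma hasSum_wallisRatio_integral_sq_mul_cot :
    HasSum (fun n : ℕ ↦ wallisRatio n / (n + 1) * (1 / (2 * n + 2)))
      (∫ t in 0..π / 2, t ^ 2 * cot t) := by
  have hmem {t : ℝ} (ht : t ∈ Set.uIoc 0 (π / 2)) : 0 < t ∧ t ≤ π / 2 := by
    rwa [Set.uIoc_of_le (by positivity)] at ht
  have hsum {t : ℝ} (ht : t ∈ Set.uIoc 0 (π / 2)) :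
      HasSum (fun n : ℕ ↦ wallisRatio n / (n + 1) * (sin t ^ (2 * n + 1) * cos t))
        (t ^ 2 * cot t) :=
    hasSum_wallisRatio_mul_sin_pow_mul_cos (abs_le.2 ⟨by linarith [hmem ht], (hmem ht).2⟩)
  have hnonneg (n : ℕ) {t : ℝ} (ht : t ∈ Set.uIoc 0 (π / 2)) :
      0 ≤ wallisRatio n / (n + 1) * (sin t ^ (2 * n + 1) * cos t) := by
    have := wallisRatio_nonneg n
    have : 0 ≤ sin t := sin_nonneg_of_nonneg_of_le_pi (hmem ht).1.le (by linarith [hmem ht])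
    have : 0 ≤ cos t := cos_nonneg_of_neg_pi_div_two_le_of_le (by linarith [hmem ht]) (hmem ht).2
    positivity
  have hint : IntervalIntegrable
      (fun t ↦ ∑' n : ℕ, wallisRatio n / (n + 1) * (sin t ^ (2 * n + 1) * cos t))
      volume 0 (π / 2) :=
    (intervalIntegrable_sq_mul_cot (by constructor <;> linarith [pi_pos])
      (by constructor <;> linarith [pi_pos])).congr fun t ht ↦ (hsum ht).tsum_eq.symm
  have h := intervalIntegral.hasSum_integral_of_dominated_convergence (μ := volume)
    (fun n t ↦ wallisRatio n / (n + 1) * (sin t ^ (2 * n + 1) * cos t))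
    (fun n ↦ Continuous.aestronglyMeasurable (by fun_prop))
    (fun n ↦ .of_forall fun t ht ↦ (norm_of_nonneg (hnonneg n ht)).le)
    (.of_forall fun t ht ↦ (hsum ht).summable) hint (.of_forall fun t ht ↦ hsum ht)
  simp only [intervalIntegral.integral_const_mul, integral_sin_pow_mul_cos, sin_pi_div_two,
    sin_zero] at h
  simpa [add_assoc, one_add_one_eq_two] using h

lemma integral_sq_mul_sin {c : ℝ} (hc : c ≠ 0) (a b : ℝ) :
    ∫ t in a..b, t ^ 2 * sin (c * t) =
      (-(b ^ 2 * cos (c * b)) / c + 2 * b * sin (c * b) / c ^ 2 + 2 * cos (c * b) / c ^ 3) -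
      (-(a ^ 2 * cos (c * a)) / c + 2 * a * sin (c * a) / c ^ 2 + 2 * cos (c * a) / c ^ 3) := by
  refine intervalIntegral.integral_eq_sub_of_hasDerivAt
    (f := fun t ↦
      -(t ^ 2 * cos (c * t)) / c + 2 * t * sin (c * t) / c ^ 2 + 2 * cos (c * t) / c ^ 3)
    (fun t _ ↦ ?_) (Continuous.intervalIntegrable (by fun_prop) _ _)
  have hlin : HasDerivAt (fun t ↦ c * t) c t := by simpa using (hasDerivAt_id' t).const_mul c
  refine (((((hasDerivAt_pow 2 t).fun_mul hlin.cos).fun_neg.div_const c).fun_add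
    ((((hasDerivAt_id' t).const_mul 2).fun_mul hlin.sin).div_const (c ^ 2))).fun_add
    ((hlin.cos.const_mul 2).div_const (c ^ 3))).congr_deriv ?_
  field_simp
  ring

lemma two_mul_integral_sq_mul_sin_two_mul (k : ℕ) :
    2 * ∫ t in 0..π / 2, t ^ 2 * sin (2 * (k + 1 : ℕ) * t) =
      π ^ 2 / 4 * ((-1) ^ k / (k + 1)) -
        (1 / 2 * (1 / ((k : ℝ) + 1) ^ 3) + 1 / 2 * ((-1) ^ k / (k + 1) ^ 3)) := by
  have harg : 2 * ((k + 1 : ℕ) : ℝ) * (π / 2) = (k + 1 : ℕ) * π := by ring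
  rw [integral_sq_mul_sin (by positivity), harg, cos_nat_mul_pi, sin_nat_mul_pi, pow_succ]
  push_cast
  simp only [mul_zero, cos_zero, sin_zero]
  field_simp
  ring

theorem integral_sq_mul_cot_zero_pi_div_two :
    ∫ t in 0..π / 2, t ^ 2 * cot t =
      π ^ 2 * log 2 / 4 - 7 / 8 * ∑' n : ℕ, 1 / ((n : ℝ) + 1) ^ 3 := by
  have hcot := tendsto_sum_integral_mul_sin_two_mul
    (intervalIntegrable_sq_div_sin (a := 0) (b := π / 2) (by constructor <;> linarith [pi_pos])
      (by constructor <;> linarith [pi_pos]))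
  have hζ := (summable_one_div_nat_add_one_pow (p := 3) (by norm_num)).hasSum.tendsto_sum_nat
  have hη := (hasSum_neg_one_pow_div_pow (p := 3) (by norm_num)).tendsto_sum_nat
  have hval := (tendsto_sum_neg_one_pow_div.const_mul (π ^ 2 / 4)).sub
    ((hζ.const_mul (1 / 2)).add (hη.const_mul (1 / 2)))
  simp only [Finset.mul_sum, ← Finset.sum_add_distrib, ← Finset.sum_sub_distrib,
    ← two_mul_integral_sq_mul_sin_two_mul] at hval
  rw [tendsto_nhds_unique hcot hval]
  ring

end SqMulCot

/-- `∑_{k≥1} 2^(2k-2) ((k-1)!)² / ((2k)! k) = π² ln 2 / 4 - (7/8) ζ(3)`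
(written with `k = n+1`, and `ζ(3) = ∑_{n≥1} 1/n³`). -/
theorem sum_sq_nu_div_factorial_mul_k :
    ∑' n : ℕ, (2 : ℝ) ^ (2 * n) * (Nat.factorial n) ^ 2
        / (Nat.factorial (2 * (n + 1)) * (n + 1))
      = Real.pi ^ 2 * Real.log 2 / 4 - 7 / 8 * ∑' n : ℕ, 1 / ((n : ℝ) + 1) ^ 3 := by
  rw [tsum_congr two_pow_mul_factorial_sq_div_eq_wallisRatio,
    hasSum_wallisRatio_integral_sq_mul_cot.tsum_eq, integral_sq_mul_cot_zero_pi_div_two]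
end

section
/- The central binomial series identity ∑_{n=0}^∞ 2^{2n−1} / ( C(2n, n) · (n+1)² · (2n+1) ) = (π² ln 2)/4 − (7/8) ζ(3) holds, where C(2n, n) is the central binomial coefficient and ζ(3) = ∑_{n=1}^∞ 1/n³. -/
open Real

/-!
Both sides equal `∫_0^{π/2} t² cot t dt`. For the series, `t² = ∑ wₙ / (n + 1) · sin^{2n+2} t` with
`wₙ = 4ⁿ / ((2n + 1) C(2n, n))` (Euler's series for `arcsin²`); multiplying by `cot t` and
integrating term by term gives `∑ wₙ / (2 (n + 1)²)`. For the closed form, write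
`t² = (π/2) t - t (π/2 - t)`. The integral of `t cot t` reduces to that of `log sin` by parts, and
`t (π/2 - t) cot t` is integrated against the conjugate Dirichlet kernel
`cot t ∼ 2 ∑ sin (2kt)`, where only the odd `k` survive and produce `∑ 1 / k³`.
-/

open Set Filter MeasureTheory
open scoped Topology FourierTransform

section RiemannLebesgue

theorem tendsto_integral_mul_cos_cocompact {f : ℝ → ℝ} (hf : Integrable f) :
    Tendsto (fun w : ℝ => ∫ t, f t * cos (w * t)) (cocompact ℝ) (𝓝 0) := by
  have hscale : Tendsto (fun w : ℝ => w * (2 * π)⁻¹) (cocompact ℝ) (cocompact ℝ) :=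
    tendsto_cocompact_mul_right₀ (by positivity)
  have hfourier := (Complex.continuous_re.tendsto 0).comp
    ((Real.tendsto_integral_exp_smul_cocompact fun t => (f t : ℂ)).comp hscale)
  refine hfourier.congr fun w => ?_
  have hcomplex : Integrable fun t => (f t : ℂ) := hf.ofReal
  have hintegrable : Integrable fun t : ℝ => 𝐞 (-(t * (w * (2 * π)⁻¹))) • (f t : ℂ) := by
    simpa [mul_comm] using (Real.fourierIntegral_convergent_iff (w * (2 * π)⁻¹)).2 hcomplex
  refine (integral_re hintegrable).symm.trans (integral_congr_ae (.of_forall fun t => ?_))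
  have harg : 2 * π * -(t * (w * (2 * π)⁻¹)) = -(w * t) := by field_simp
  simp only [Circle.smul_def, Real.fourierChar_apply, smul_eq_mul, harg]
  rw [RCLike.re_eq_complex_re, Complex.re_mul_ofReal, Complex.exp_ofReal_mul_I_re, cos_neg,
    mul_comm]

theorem tendsto_intervalIntegral_mul_cos_cocompact {f : ℝ → ℝ} {a b : ℝ}
    (hf : IntervalIntegrable f volume a b) :
    Tendsto (fun w : ℝ => ∫ t in a..b, f t * cos (w * t)) (cocompact ℝ) (𝓝 0) := by
  have hline := tendsto_integral_mul_cos_cocompact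
    ((integrable_indicator_iff measurableSet_uIoc).2 hf.def')
  have hindicator (w : ℝ) : ∫ t, (uIoc a b).indicator f t * cos (w * t)
      = ∫ t in uIoc a b, f t * cos (w * t) := by
    rw [← integral_indicator measurableSet_uIoc]
    exact integral_congr_ae (.of_forall fun t =>
      (indicator_mul_left (uIoc a b) f fun t => cos (w * t)).symm)
  simp_rw [hindicator] at hline
  simpa [intervalIntegral.intervalIntegral_eq_integral_uIoc] using
    hline.const_smul (if a ≤ b then (1 : ℝ) else -1)

end RiemannLebesgue

theorem sum_range_two_mul_sin_mul_sin (n : ℕ) (t : ℝ) :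
    ∑ k ∈ Finset.range n, 2 * sin t * sin (2 * (k + 1 : ℕ) * t)
      = cos t - cos ((2 * n + 1) * t) := by
  have hterm (k : ℕ) : 2 * sin t * sin (2 * (k + 1 : ℕ) * t)
      = cos ((2 * k + 1) * t) - cos ((2 * (k + 1 : ℕ) + 1) * t) := by
    rw [mul_right_comm, two_mul_sin_mul_sin]
    push_cast
    ring_nf
  rw [Finset.sum_congr rfl fun k _ => hterm k,
    Finset.sum_range_sub' fun k : ℕ => cos ((2 * (k : ℝ) + 1) * t)]
  simp

/-- The expansion `cot t ∼ 2 ∑ sin (2kt)`, integrated against `g t * sin t`. -/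
theorem tendsto_sum_integral_mul_sin_mul_sin {g : ℝ → ℝ} {a b : ℝ}
    (hg : IntervalIntegrable g volume a b) :
    Tendsto (fun n : ℕ => ∑ k ∈ Finset.range n,
        ∫ t in a..b, g t * (2 * sin t * sin (2 * (k + 1 : ℕ) * t)))
      atTop (𝓝 (∫ t in a..b, g t * cos t)) := by
  have hmul {h : ℝ → ℝ} (hh : Continuous h) : IntervalIntegrable (fun t => g t * h t) volume a b :=
    hg.mul_continuousOn hh.continuousOn
  have hfreq : Tendsto (fun n : ℕ => 2 * (n : ℝ) + 1) atTop (cocompact ℝ) :=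
    (tendsto_atTop_add_const_right _ _
      (tendsto_natCast_atTop_atTop.const_mul_atTop two_pos)).mono_right atTop_le_cocompact
  have hlim := ((tendsto_intervalIntegral_mul_cos_cocompact hg).comp hfreq).const_sub
    (∫ t in a..b, g t * cos t)
  rw [sub_zero] at hlim
  refine hlim.congr fun n => ?_
  rw [← intervalIntegral.integral_finsetSum fun k _ => hmul (by fun_prop), Function.comp_apply,
    ← intervalIntegral.integral_sub (hmul continuous_cos) (hmul (by fun_prop))]
  refine intervalIntegral.integral_congr fun t _ => ?_
  simp only [← mul_sub, ← sum_range_two_mul_sin_mul_sin, Finset.mul_sum]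

theorem summable_one_div_add_one_pow {s : ℕ} (hs : 1 < s) :
    Summable fun n : ℕ => 1 / ((n : ℝ) + 1) ^ s := by
  simpa using (summable_nat_add_iff 1).2 (Real.summable_one_div_nat_pow.2 hs)

theorem hasSum_neg_one_pow_div_add_one_pow {s : ℕ} (hs : 1 < s) :
    HasSum (fun k : ℕ => (-1 : ℝ) ^ k / ((k : ℝ) + 1) ^ s)
      ((1 - 2 / 2 ^ s) * ∑' n : ℕ, 1 / ((n : ℝ) + 1) ^ s) := by
  set z : ℕ → ℝ := fun n => 1 / ((n : ℝ) + 1) ^ s with hz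
  have hsum : Summable z := summable_one_div_add_one_pow hs
  have heven : Summable fun k => z (2 * k) :=
    hsum.comp_injective (mul_right_injective₀ two_ne_zero)
  have hodd : HasSum (fun k => z (2 * k + 1)) (1 / 2 ^ s * ∑' n, z n) := by
    refine (hsum.hasSum.mul_left (1 / 2 ^ s)).congr_fun fun k => ?_
    simp only [hz]
    rw [one_div_mul_one_div, ← mul_pow]
    push_cast
    ring_nf
  have htotal : ∑' n, z n = (∑' k, z (2 * k)) + 1 / 2 ^ s * ∑' n, z n :=
    hsum.hasSum.unique (heven.hasSum.even_add_odd hodd)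
  have hvalue : (1 - 2 / 2 ^ s) * ∑' n, z n
      = (∑' k, z (2 * k)) + -(1 / 2 ^ s * ∑' n, z n) := by linear_combination htotal
  rw [hvalue]
  refine HasSum.even_add_odd (heven.hasSum.congr_fun fun k => ?_) (hodd.neg.congr_fun fun k => ?_)
  · simp [hz, pow_mul]
  · simp [hz, pow_succ, pow_mul, neg_div]

section CotIntegrals

theorem intervalIntegrable_id_div_sin {a b : ℝ} (ha : a ∈ Ioo (-π) π) (hb : b ∈ Ioo (-π) π) :
    IntervalIntegrable (fun t => t / sin t) volume a b := by
  have hsub : uIcc a b ⊆ Ioo (-π) π := OrdConnected.uIcc_subset inferInstance ha hb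
  have hsinc : ContinuousOn (fun t => (sinc t)⁻¹) (uIcc a b) := by
    refine continuous_sinc.continuousOn.inv₀ fun t ht => ?_
    rcases eq_or_ne t 0 with rfl | h0
    · simp
    · have hsin := (sin_eq_zero_iff_of_lt_of_lt (hsub ht).1 (hsub ht).2).not.2 h0
      simp [sinc_of_ne_zero h0, hsin, h0]
  refine hsinc.intervalIntegrable.congr_ae ?_
  filter_upwards [ae_restrict_of_ae (Measure.ae_ne volume 0)] with t h0
  rw [sinc_of_ne_zero h0, inv_div]

theorem intervalIntegrable_mul_id_mul_cot {f : ℝ → ℝ} (hf : Continuous f) :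
    IntervalIntegrable (fun t => f t * (t * cot t)) volume 0 (π / 2) := by
  have hpi := pi_pos
  have hdiv : IntervalIntegrable (fun t => t / sin t) volume 0 (π / 2) :=
    intervalIntegrable_id_div_sin ⟨by linarith, hpi⟩ ⟨by linarith, by linarith⟩
  refine (hdiv.continuousOn_mul (hf.mul continuous_cos).continuousOn).congr fun t _ => ?_
  simp only [Pi.mul_apply, cot_eq_cos_div_sin]
  ring

theorem continuousOn_mul_log_sin : ContinuousOn (fun t => t * log (sin t)) (Ico 0 π) := by
  have hsinc {t : ℝ} (ht : t ∈ Ico 0 π) : sinc t ≠ 0 := by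
    rcases ht.1.eq_or_lt with rfl | h0
    · simp
    · have hsin := sin_pos_of_pos_of_lt_pi h0 ht.2
      rw [sinc_of_ne_zero h0.ne']
      positivity
  have hcont : ContinuousOn (fun t => t * log t + t * log (sinc t)) (Ico 0 π) :=
    continuous_mul_log.continuousOn.add
      (continuousOn_id.mul (continuous_sinc.continuousOn.log fun t ht => hsinc ht))
  refine hcont.congr fun t ht => ?_
  rcases eq_or_ne t 0 with rfl | h0
  · simp
  · have hfactor : sin t = t * sinc t := by rw [sinc_of_ne_zero h0, mul_div_cancel₀ _ h0]
    simp only [hfactor]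
    rw [log_mul h0 (hsinc ht), mul_add]

theorem integral_id_mul_cot_zero_pi_div_two :
    ∫ t in 0..(π / 2), t * cot t = π / 2 * log 2 := by
  have hpi := pi_pos
  have hcont : ContinuousOn (fun t => t * log (sin t)) (Icc 0 (π / 2)) :=
    continuousOn_mul_log_sin.mono (Icc_subset_Ico_right (by linarith))
  have hderiv : ∀ t ∈ Ioo 0 (π / 2),
      HasDerivAt (fun t => t * log (sin t)) (log (sin t) + t * cot t) t := fun t ht => by
    have hsin := sin_pos_of_pos_of_lt_pi ht.1 (by linarith [ht.2])
    simpa [cot_eq_cos_div_sin] using! (hasDerivAt_id t).mul ((hasDerivAt_sin t).log hsin.ne')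
  have hlog : IntervalIntegrable (fun t => log (sin t)) volume 0 (π / 2) :=
    intervalIntegrable_log_sin
  have hcot : IntervalIntegrable (fun t => t * cot t) volume 0 (π / 2) := by
    simpa using intervalIntegrable_mul_id_mul_cot (continuous_const (y := (1 : ℝ)))
  have hftc := intervalIntegral.integral_eq_sub_of_hasDerivAt_of_le (by positivity) hcont hderiv
    (hlog.add hcot)
  rw [intervalIntegral.integral_add hlog hcot, integral_log_sin_zero_pi_div_two] at hftc
  simp only [sin_pi_div_two, log_one, mul_zero, zero_mul, sub_zero] at hftc
  linarith

theorem integral_mul_pi_div_two_sub_mul_sin {n : ℕ} (hn : n ≠ 0) :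
    ∫ t in 0..(π / 2), t * (π / 2 - t) * sin (2 * n * t) = (1 - (-1) ^ n) / (4 * (n : ℝ) ^ 3) := by
  set a : ℝ := 2 * n with ha
  have ha0 : a ≠ 0 := by positivity
  have hderiv (t : ℝ) : HasDerivAt
      (fun t => -(t * (π / 2 - t) * cos (a * t)) / a + (π / 2 - 2 * t) * sin (a * t) / a ^ 2
        - 2 * cos (a * t) / a ^ 3)
      (t * (π / 2 - t) * sin (a * t)) t := by
    have hlin : HasDerivAt (fun t => a * t) a t := hasDerivAt_const_mul a
    have hpoly := (hasDerivAt_id t).mul ((hasDerivAt_id t).const_sub (π / 2))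
    have hslope := ((hasDerivAt_id t).const_mul 2).const_sub (π / 2)
    refine ((((hpoly.mul hlin.cos).neg.div_const a).add
      ((hslope.mul hlin.sin).div_const (a ^ 2))).sub
      ((hlin.cos.const_mul 2).div_const (a ^ 3))).congr_deriv ?_
    simp only [id, Pi.mul_apply]
    field_simp
    ring
  have hend : a * (π / 2) = n * π := by rw [ha]; ring
  rw [intervalIntegral.integral_eq_sub_of_hasDerivAt (fun t _ => hderiv t)
    (Continuous.intervalIntegrable (by fun_prop) _ _), hend, cos_nat_mul_pi, sin_nat_mul_pi]
  simp only [ha, mul_zero, cos_zero, sin_zero]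
  field_simp
  ring

theorem integral_mul_pi_div_two_sub_mul_cot :
    ∫ t in 0..(π / 2), t * (π / 2 - t) * cot t = 7 / 8 * ∑' n : ℕ, 1 / ((n : ℝ) + 1) ^ 3 := by
  have hpi := pi_pos
  have hintegrable : IntervalIntegrable (fun t => (π / 2 - t) * (t / sin t)) volume 0 (π / 2) :=
    (intervalIntegrable_id_div_sin ⟨by linarith, hpi⟩
      ⟨by linarith, by linarith⟩).continuousOn_mul (by fun_prop)
  have hterm (k : ℕ) : ∫ t in 0..(π / 2),
      (π / 2 - t) * (t / sin t) * (2 * sin t * sin (2 * (k + 1 : ℕ) * t))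
      = 1 / 2 * (1 / ((k : ℝ) + 1) ^ 3 + (-1) ^ k / ((k : ℝ) + 1) ^ 3) := by
    calc _ = ∫ t in 0..(π / 2), 2 * (t * (π / 2 - t) * sin (2 * (k + 1 : ℕ) * t)) := by
          refine intervalIntegral.integral_congr_ae (.of_forall fun t ht => ?_)
          rw [uIoc_of_le (by positivity)] at ht
          have hsin := sin_pos_of_pos_of_lt_pi ht.1 (by linarith [ht.2])
          field_simp
      _ = _ := by
          rw [intervalIntegral.integral_const_mul,
            integral_mul_pi_div_two_sub_mul_sin k.succ_ne_zero, pow_succ]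
          push_cast
          field_simp
          ring
  have hs : 1 < 3 := by norm_num
  have hseries := ((summable_one_div_add_one_pow hs).hasSum.add
    (hasSum_neg_one_pow_div_add_one_pow hs)).mul_left (1 / 2)
  have hlim := tendsto_sum_integral_mul_sin_mul_sin hintegrable
  simp_rw [hterm] at hlim
  calc _ = ∫ t in 0..(π / 2), (π / 2 - t) * (t / sin t) * cos t :=
        intervalIntegral.integral_congr fun t _ => by simp only [cot_eq_cos_div_sin]; ring
    _ = _ := tendsto_nhds_unique hlim hseries.tendsto_sum_nat
    _ = _ := by ring

theorem integral_sq_mul_cot :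
    ∫ t in 0..(π / 2), t ^ 2 * cot t
      = π ^ 2 * log 2 / 4 - 7 / 8 * ∑' n : ℕ, 1 / ((n : ℝ) + 1) ^ 3 := by
  have hlinear := intervalIntegrable_mul_id_mul_cot (continuous_const (y := π / 2))
  have hquadratic : IntervalIntegrable (fun t => t * (π / 2 - t) * cot t) volume 0 (π / 2) :=
    (intervalIntegrable_mul_id_mul_cot (f := fun t => π / 2 - t) (by fun_prop)).congr
      fun t _ => by ring
  calc ∫ t in 0..(π / 2), t ^ 2 * cot t
      = ∫ t in 0..(π / 2), (π / 2 * (t * cot t) - t * (π / 2 - t) * cot t) := by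
        congr! 2 with t
        ring
    _ = _ := by
        rw [intervalIntegral.integral_sub hlinear hquadratic, intervalIntegral.integral_const_mul,
          integral_id_mul_cot_zero_pi_div_two, integral_mul_pi_div_two_sub_mul_cot]
        ring

end CotIntegrals

section ArcsinSquared

/-- The closed form of the Wallis integral `∫_0^{π/2} sin^{2n+1}`, used for the coefficients of the
expansion `t = cos t * ∑ wallis n * sin t ^ (2n+1)`. -/
noncomputable def wallis (n : ℕ) : ℝ := 4 ^ n / ((2 * n + 1) * n.centralBinom)

theorem wallis_pos (n : ℕ) : 0 < wallis n := by
  have := n.centralBinom_pos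
  unfold wallis
  positivity

theorem wallis_div_nonneg (n : ℕ) : 0 ≤ wallis n / (n + 1) :=
  div_nonneg (wallis_pos n).le (by positivity)

theorem wallis_succ (n : ℕ) : (2 * n + 3) * wallis (n + 1) = (2 * n + 2) * wallis n := by
  have hrec : ((n : ℝ) + 1) * (n + 1).centralBinom = 2 * (2 * n + 1) * n.centralBinom := by
    exact_mod_cast n.succ_mul_centralBinom_succ
  have hpos : (0 : ℝ) < n.centralBinom := by exact_mod_cast n.centralBinom_pos
  have hpos' : (0 : ℝ) < (n + 1).centralBinom := by exact_mod_cast (n + 1).centralBinom_pos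
  unfold wallis
  push_cast
  field_simp
  linear_combination (-2 * (2 * n + 3) * 4 ^ n : ℝ) * hrec

theorem wallis_le_one (n : ℕ) : wallis n ≤ 1 := by
  induction n with
  | zero => simp [wallis]
  | succ n ih => nlinarith [wallis_succ n, wallis_pos n]

/-- The `N`-th remainder of the expansion `t = cos t * ∑ wallis n * sin t ^ (2n+1)`. Its derivative
is a single nonnegative term, which makes the convergence a matter of monotonicity. -/
noncomputable def idRemainder (N : ℕ) (t : ℝ) : ℝ :=
  t - ∑ n ∈ Finset.range N, wallis n * (sin t ^ (2 * n + 1) * cos t)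

/-- The `N`-th remainder of the expansion `t² = ∑ wallis n / (n+1) * sin t ^ (2n+2)`, an
antiderivative of `2 * idRemainder N`. -/
noncomputable def sqRemainder (N : ℕ) (t : ℝ) : ℝ :=
  t ^ 2 - ∑ n ∈ Finset.range N, wallis n / (n + 1) * sin t ^ (2 * n + 2)

theorem hasDerivAt_idRemainder (N : ℕ) (t : ℝ) :
    HasDerivAt (idRemainder N) ((2 * N + 1) * wallis N * sin t ^ (2 * N)) t := by
  induction N with
  | zero =>
    have hzero : idRemainder 0 = id := by ext; simp [idRemainder]
    simpa [hzero, wallis] using hasDerivAt_id t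
  | succ N ih =>
    have hstep : idRemainder (N + 1)
        = fun t => idRemainder N t - wallis N * (sin t ^ (2 * N + 1) * cos t) := by
      ext t
      simp only [idRemainder, Finset.sum_range_succ]
      ring
    rw [hstep]
    refine (ih.sub ((((hasDerivAt_sin t).pow (2 * N + 1)).mul
      (hasDerivAt_cos t)).const_mul (wallis N))).congr_deriv ?_
    simp only [Pi.pow_apply, Nat.add_sub_cancel]
    push_cast
    linear_combination (-sin t ^ (2 * N + 2)) * wallis_succ N
      - (2 * N + 1) * wallis N * sin t ^ (2 * N) * sin_sq_add_cos_sq t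

theorem hasDerivAt_sqRemainder (N : ℕ) (t : ℝ) :
    HasDerivAt (sqRemainder N) (2 * idRemainder N t) t := by
  have hterm (n : ℕ) : HasDerivAt (fun t => wallis n / (n + 1) * sin t ^ (2 * n + 2))
      (2 * (wallis n * (sin t ^ (2 * n + 1) * cos t))) t := by
    refine (((hasDerivAt_sin t).pow (2 * n + 2)).const_mul _).congr_deriv ?_
    push_cast
    field_simp
  refine ((hasDerivAt_pow 2 t).sub (HasDerivAt.fun_sum fun n _ => hterm n)).congr_deriv ?_
  simp [idRemainder, mul_sub, Finset.mul_sum]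

theorem nonneg_of_hasDerivAt_nonneg {f f' : ℝ → ℝ} {a b : ℝ}
    (hf : ∀ t ∈ Icc a b, HasDerivAt f (f' t) t) (ha : 0 ≤ f a) (hf' : ∀ t ∈ Icc a b, 0 ≤ f' t) :
    ∀ t ∈ Icc a b, 0 ≤ f t := by
  have hmono : MonotoneOn f (Icc a b) :=
    monotoneOn_of_hasDerivWithinAt_nonneg (convex_Icc a b)
      (fun t ht => (hf t ht).continuousAt.continuousWithinAt)
      (fun t ht => (hf t (interior_subset ht)).hasDerivWithinAt)
      fun t ht => hf' t (interior_subset ht)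
  exact fun t ht => ha.trans (hmono (left_mem_Icc.2 (ht.1.trans ht.2)) ht ht.1)

variable (N : ℕ)

theorem mul_wallis_mul_sin_pow_nonneg (t : ℝ) :
    0 ≤ (2 * N + 1) * wallis N * sin t ^ (2 * N) :=
  mul_nonneg (mul_nonneg (by positivity) (wallis_pos N).le) ((even_two_mul N).pow_nonneg _)

theorem idRemainder_nonneg : ∀ t ∈ Icc 0 π, 0 ≤ idRemainder N t :=
  nonneg_of_hasDerivAt_nonneg (fun t _ => hasDerivAt_idRemainder N t) (by simp [idRemainder])
    fun t _ => mul_wallis_mul_sin_pow_nonneg N t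

theorem idRemainder_mul_cos_le :
    ∀ t ∈ Icc 0 π, idRemainder N t * cos t ≤ wallis N * sin t ^ (2 * N + 1) := by
  have hderiv (t : ℝ) : HasDerivAt
      (fun t => wallis N * sin t ^ (2 * N + 1) - idRemainder N t * cos t)
      (idRemainder N t * sin t) t := by
    refine ((((hasDerivAt_sin t).pow (2 * N + 1)).const_mul (wallis N)).sub
      ((hasDerivAt_idRemainder N t).mul (hasDerivAt_cos t))).congr_deriv ?_
    simp only [Nat.add_sub_cancel]
    push_cast
    ring
  have hnonneg := nonneg_of_hasDerivAt_nonneg (b := π) (fun t _ => hderiv t) (by simp [idRemainder])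
    fun t ht => mul_nonneg (idRemainder_nonneg N t ht) (sin_nonneg_of_mem_Icc ht)
  exact fun t ht => sub_nonneg.1 (hnonneg t ht)

theorem sqRemainder_nonneg : ∀ t ∈ Icc 0 π, 0 ≤ sqRemainder N t :=
  nonneg_of_hasDerivAt_nonneg (fun t _ => hasDerivAt_sqRemainder N t) (by simp [sqRemainder])
    fun t ht => mul_nonneg two_pos.le (idRemainder_nonneg N t ht)

theorem sqRemainder_le : ∀ t ∈ Icc 0 π, sqRemainder N t ≤ 2 * t * idRemainder N t := by
  have hderiv (t : ℝ) : HasDerivAt (fun t => 2 * t * idRemainder N t - sqRemainder N t)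
      (2 * t * ((2 * N + 1) * wallis N * sin t ^ (2 * N))) t := by
    refine ((((hasDerivAt_id t).const_mul 2).mul (hasDerivAt_idRemainder N t)).sub
      (hasDerivAt_sqRemainder N t)).congr_deriv ?_
    simp
  have hnonneg := nonneg_of_hasDerivAt_nonneg (b := π) (fun t _ => hderiv t) (by simp [sqRemainder])
    fun t ht => mul_nonneg (mul_nonneg two_pos.le ht.1) (mul_wallis_mul_sin_pow_nonneg N t)
  exact fun t ht => sub_nonneg.1 (hnonneg t ht)

theorem tendsto_sqRemainder {t : ℝ} (ht : t ∈ Ico 0 (π / 2)) :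
    Tendsto (fun N => sqRemainder N t) atTop (𝓝 0) := by
  have hcc : t ∈ Icc 0 π := ⟨ht.1, by linarith [ht.2, pi_pos]⟩
  have hcos : 0 < cos t := cos_pos_of_mem_Ioo ⟨by linarith [ht.1, pi_pos], ht.2⟩
  have hsin := sin_nonneg_of_mem_Icc hcc
  have hsin_lt : sin t < 1 := by nlinarith [sin_sq_add_cos_sq t]
  have hbound (N : ℕ) : sqRemainder N t ≤ 2 * t / cos t * sin t ^ N := by
    have hpow : wallis N * sin t ^ (2 * N + 1) ≤ sin t ^ N :=
      (mul_le_of_le_one_left (by positivity) (wallis_le_one N)).trans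
        (pow_le_pow_of_le_one hsin hsin_lt.le (by lia))
    have hid : idRemainder N t ≤ sin t ^ N / cos t :=
      (le_div_iff₀ hcos).2 ((idRemainder_mul_cos_le N t hcc).trans hpow)
    calc sqRemainder N t ≤ 2 * t * idRemainder N t := sqRemainder_le N t hcc
      _ ≤ 2 * t * (sin t ^ N / cos t) := by
          have := ht.1
          gcongr
      _ = 2 * t / cos t * sin t ^ N := by ring
  refine squeeze_zero (fun N => sqRemainder_nonneg N t hcc) hbound ?_
  simpa using (tendsto_pow_atTop_nhds_zero_of_lt_one hsin hsin_lt).const_mul (2 * t / cos t)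

theorem hasSum_wallis_div_mul_sin_pow {t : ℝ} (ht : |t| < π / 2) :
    HasSum (fun n : ℕ => wallis n / (n + 1) * sin t ^ (2 * n + 2)) (t ^ 2) := by
  wlog h0 : 0 ≤ t generalizing t
  · have hneg := this (t := -t) (by rwa [abs_neg]) (by linarith)
    simpa [Even.neg_pow, parity_simps] using hneg
  rw [hasSum_iff_tendsto_nat_of_nonneg fun n => mul_nonneg
    (wallis_div_nonneg n) (Even.pow_nonneg (by simp [parity_simps]) _)]
  have hlim := (tendsto_sqRemainder ⟨h0, (le_abs_self t).trans_lt ht⟩).const_sub (t ^ 2)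
  rw [sub_zero] at hlim
  exact hlim.congr fun N => sub_sub_self _ _

theorem summable_wallis_div : Summable fun n : ℕ => wallis n / (n + 1) := by
  refine summable_of_sum_range_le (c := (π / 2) ^ 2) wallis_div_nonneg fun N => ?_
  simpa [sqRemainder] using sqRemainder_nonneg N (π / 2) ⟨by positivity, by linarith [pi_pos]⟩

theorem integral_sin_pow_mul_cos_zero_pi_div_two (m : ℕ) :
    ∫ t in 0..(π / 2), sin t ^ m * cos t = 1 / (m + 1) := by
  calc ∫ t in 0..(π / 2), sin t ^ m * cos t = ∫ u in (0 : ℝ)..1, u ^ m := by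
        simpa using integral_sin_pow_mul_cos_pow_odd (a := 0) (b := π / 2) m 0
    _ = 1 / (m + 1) := by simp [integral_pow]

theorem hasSum_integral_sq_mul_cot :
    HasSum (fun n : ℕ => wallis n / (2 * ((n : ℝ) + 1) ^ 2))
      (∫ t in 0..(π / 2), t ^ 2 * cot t) := by
  have hpointwise : ∀ t ∈ Ioc 0 (π / 2),
      HasSum (fun n : ℕ => wallis n / (n + 1) * (sin t ^ (2 * n + 1) * cos t)) (t ^ 2 * cot t) := by
    intro t ht
    rcases ht.2.eq_or_lt with rfl | hlt
    · simp [cot_eq_cos_div_sin, hasSum_zero]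
    have hsin := sin_pos_of_pos_of_lt_pi ht.1 (by linarith [pi_pos])
    refine ((hasSum_wallis_div_mul_sin_pow ((abs_of_pos ht.1).trans_lt hlt)).mul_right
      (cot t)).congr_fun fun n => ?_
    rw [cot_eq_cos_div_sin, pow_succ (sin t) (2 * n + 1)]
    field_simp
  have hterm (n : ℕ) : ∫ t in 0..(π / 2), wallis n / (n + 1) * (sin t ^ (2 * n + 1) * cos t)
      = wallis n / (2 * ((n : ℝ) + 1) ^ 2) := by
    rw [intervalIntegral.integral_const_mul, integral_sin_pow_mul_cos_zero_pi_div_two]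
    push_cast
    field_simp
    ring
  simp_rw [← hterm]
  refine intervalIntegral.hasSum_integral_of_dominated_convergence
    (fun n _ => wallis n / (n + 1)) (fun n => Continuous.aestronglyMeasurable (by fun_prop))
    (fun n => .of_forall fun t _ => ?_) (.of_forall fun _ _ => summable_wallis_div)
    intervalIntegrable_const (.of_forall fun t ht => ?_)
  · rw [norm_mul, norm_mul, norm_pow, norm_of_nonneg (wallis_div_nonneg n)]
    exact mul_le_of_le_one_right (wallis_div_nonneg n) (mul_le_one₀ (pow_le_one₀ (norm_nonneg _)
      (abs_sin_le_one t)) (norm_nonneg _) (abs_cos_le_one t))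
  · exact hpointwise t (by rwa [uIoc_of_le (by positivity)] at ht)

end ArcsinSquared

theorem two_zpow_div_choose_eq_wallis_div (n : ℕ) :
    (2 : ℝ) ^ (2 * (n : ℤ) - 1)
        / (Nat.choose (2 * n) n * ((n : ℝ) + 1) ^ 2 * (2 * (n : ℝ) + 1))
      = wallis n / (2 * ((n : ℝ) + 1) ^ 2) := by
  have hpow : (2 : ℝ) ^ (2 * (n : ℤ) - 1) = 4 ^ n / 2 := by
    rw [zpow_sub_one₀ two_ne_zero, zpow_mul]
    norm_num [div_eq_mul_inv]
  rw [hpow, wallis, Nat.centralBinom_eq_two_mul_choose]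
  field_simp

/-- `∑_{n≥0} 2^(2n-1) / (C(2n,n) (n+1)² (2n+1)) = π² ln 2 / 4 - (7/8) ζ(3)`,
where `ζ(3) = ∑_{n≥1} 1/n³`. -/
theorem centralBinomial_sum :
    ∑' n : ℕ, (2 : ℝ) ^ (2 * (n : ℤ) - 1)
        / (Nat.choose (2 * n) n * ((n : ℝ) + 1) ^ 2 * (2 * (n : ℝ) + 1))
      = Real.pi ^ 2 * Real.log 2 / 4 - 7 / 8 * ∑' n : ℕ, 1 / ((n : ℝ) + 1) ^ 3 := by
  simp_rw [two_zpow_div_choose_eq_wallis_div]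
  rw [hasSum_integral_sq_mul_cot.tsum_eq, integral_sq_mul_cot]
end

section
/- Let X and Z be independent standard normal N(0,1) random variables, let r be a real number with |r| < 1, and set Y = r X + √(1 − r²) Z (so (X, Y) is bivariate Gaussian with standard normal marginals and correlation r). Then E( ln|X| · ln|Y| ) = μ² + ∑_{k=1}^∞ ν_{2k}² r^{2k} / (2k)!, where μ = −(ln 2 + γ)/2 and ν_{2k} = 2^{k−1} (k−1)!. Equivalently, ∫_ℝ∫_ℝ ln|x| · ln|r x + √(1−r²) z| f(x) f(z) dx dz = μ² + ∑_{k=1}^∞ ν_{2k}² r^{2k}/(2k)!, where f is the standard normal density. -/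
open MeasureTheory Real
open ProbabilityTheory Set Filter Topology
open scoped Nat

/-!
Frullani's formula `log u = ∫₀^∞ t⁻¹ (e⁻ᵗ - e⁻ᵘᵗ) dt` turns the covariance of `log (X² / 2)` and
`log (Y² / 2)`, which is `4` times that of `log |X|` and `log |Y|`, into the integral over
`s, t > 0` of `s⁻¹ t⁻¹` times the covariance of `exp (-s X² / 2)` and `exp (-t Y² / 2)`. The latter
is `((1 + s) (1 + t) - s t r²) ^ (-1/2) - ((1 + s) (1 + t)) ^ (-1/2)`, a Gaussian integral. Its
binomial expansion in powers of `r²` separates `s` from `t`, so every coefficient is the square of a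
beta integral. The mean of `log |X|` is the derivative at `0` of `t ↦ E |X|ᵗ`, which is expressed
through `Γ ((t + 1) / 2)`.
-/

section Covariance

variable {Ω S T : Type*} [MeasurableSpace Ω] [MeasurableSpace S] [MeasurableSpace T]
  {μ : Measure Ω}

lemma covariance_eq_sub_of_integrable [IsProbabilityMeasure μ] {X Y : Ω → ℝ}
    (hX : Integrable X μ) (hY : Integrable Y μ) (hXY : Integrable (fun ω => X ω * Y ω) μ) :
    cov[X, Y; μ] = ∫ ω, X ω * Y ω ∂μ - (∫ ω, X ω ∂μ) * ∫ ω, Y ω ∂μ := by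
  simp_rw [covariance, sub_mul, mul_sub]
  rw [integral_sub (hXY.sub' (hX.mul_const _)) ((hY.const_mul _).sub' (integrable_const _)),
    integral_sub hXY (hX.mul_const _), integral_sub (hY.const_mul _) (integrable_const _),
    integral_const_mul, integral_mul_const, integral_const, probReal_univ, one_smul, sub_self,
    sub_zero]

lemma covariance_congr_ae {X X' Y Y' : Ω → ℝ} (hX : X =ᵐ[μ] X') (hY : Y =ᵐ[μ] Y') :
    cov[X, Y; μ] = cov[X', Y'; μ] := by
  rw [covariance, covariance, integral_congr_ae hX, integral_congr_ae hY]
  refine integral_congr_ae ?_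
  filter_upwards [hX, hY] with ω hXω hYω
  rw [hXω, hYω]

lemma covariance_integral_integral [IsProbabilityMeasure μ] {ν : Measure S} {τ : Measure T}
    [SFinite ν] [SFinite τ] {F : Ω → S → ℝ} {G : Ω → T → ℝ}
    (hF : Integrable (Function.uncurry F) (μ.prod ν))
    (hG : Integrable (Function.uncurry G) (μ.prod τ))
    (hFG : Integrable (fun w : Ω × S × T => F w.1 w.2.1 * G w.1 w.2.2) (μ.prod (ν.prod τ))) :
    cov[fun ω => ∫ s, F ω s ∂ν, fun ω => ∫ t, G ω t ∂τ; μ]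
      = ∫ z, cov[fun ω => F ω z.1, fun ω => G ω z.2; μ] ∂ν.prod τ := by
  have hFint : Integrable (fun ω => ∫ s, F ω s ∂ν) μ := hF.integral_prod_left
  have hGint : Integrable (fun ω => ∫ t, G ω t ∂τ) μ := hG.integral_prod_left
  have hFmean : Integrable (fun s => ∫ ω, F ω s ∂μ) ν := hF.integral_prod_right
  have hGmean : Integrable (fun t => ∫ ω, G ω t ∂μ) τ := hG.integral_prod_right
  have hcov : ∀ᵐ z ∂ν.prod τ, cov[fun ω => F ω z.1, fun ω => G ω z.2; μ]
      = ∫ ω, F ω z.1 * G ω z.2 ∂μ - (∫ ω, F ω z.1 ∂μ) * ∫ ω, G ω z.2 ∂μ := by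
    filter_upwards [Measure.quasiMeasurePreserving_fst.ae hF.prod_left_ae,
      Measure.quasiMeasurePreserving_snd.ae hG.prod_left_ae, hFG.prod_left_ae] with z hFz hGz hFGz
    exact covariance_eq_sub_of_integrable hFz hGz hFGz
  rw [covariance_eq_sub_of_integrable hFint hGint
      (by simpa only [integral_prod_mul] using hFG.integral_prod_left),
    integral_congr_ae hcov, integral_sub hFG.integral_prod_right (hFmean.mul_prod hGmean),
    integral_prod_mul (fun s => ∫ ω, F ω s ∂μ) (fun t => ∫ ω, G ω t ∂μ),
    integral_integral_swap hF, integral_integral_swap hG,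
    ← integral_integral_swap (f := fun ω (z : S × T) => F ω z.1 * G ω z.2) hFG]
  simp_rw [integral_prod_mul]

end Covariance

section Frullani

/-- The kernel of Frullani's representation `log u = ∫₀^∞ t⁻¹ (e⁻ᵗ - e⁻ᵘᵗ) dt`, through which
covariances of logarithms become integrals of covariances of exponentials. -/
noncomputable def frullaniKernel (u t : ℝ) : ℝ := t⁻¹ * (exp (-t) - exp (-(u * t)))

lemma measurable_uncurry_frullaniKernel : Measurable (Function.uncurry frullaniKernel) := by
  unfold frullaniKernel Function.uncurry
  fun_prop

lemma abs_inv_mul_exp_sub_exp_le {a b t : ℝ} (hab : a ≤ b) (ht : 0 < t) :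
    |t⁻¹ * (exp (-(a * t)) - exp (-(b * t)))| ≤ (b - a) * exp (-a * t) := by
  have hfactor : exp (-(a * t)) - exp (-(b * t))
      = exp (-a * t) * (1 - exp (-((b - a) * t))) := by
    rw [mul_sub, mul_one, ← exp_add]
    ring_nf
  have hle : 1 - exp (-((b - a) * t)) ≤ (b - a) * t := by
    linarith [one_sub_le_exp_neg ((b - a) * t)]
  have hnonneg : 0 ≤ 1 - exp (-((b - a) * t)) := by
    rw [sub_nonneg, exp_le_one_iff, neg_nonpos]
    exact mul_nonneg (sub_nonneg.mpr hab) ht.le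
  rw [hfactor, abs_of_nonneg (by positivity), inv_mul_le_iff₀ ht]
  calc exp (-a * t) * (1 - exp (-((b - a) * t)))
      ≤ exp (-a * t) * ((b - a) * t) := by gcongr
    _ = t * ((b - a) * exp (-a * t)) := by ring

lemma integrableOn_inv_mul_exp_sub_exp {a b : ℝ} (ha : 0 < a) (hab : a ≤ b) :
    IntegrableOn (fun t => t⁻¹ * (exp (-(a * t)) - exp (-(b * t)))) (Ioi 0) := by
  refine ((exp_neg_integrableOn_Ioi 0 ha).const_mul (b - a)).mono'
    (by fun_prop : Measurable _).aestronglyMeasurable ?_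
  filter_upwards [ae_restrict_mem measurableSet_Ioi] with t ht
  exact abs_inv_mul_exp_sub_exp_le hab ht

variable {u : ℝ}

lemma integrableOn_frullaniKernel (hu : 0 < u) : IntegrableOn (frullaniKernel u) (Ioi 0) := by
  rcases le_total 1 u with h | h
  · simpa only [one_mul] using! integrableOn_inv_mul_exp_sub_exp one_pos h
  · refine (integrableOn_inv_mul_exp_sub_exp hu h).neg.congr (ae_of_all _ fun t => ?_)
    simp only [frullaniKernel, Pi.neg_apply, one_mul]
    ring

lemma integral_frullaniKernel (hu : 0 < u) : ∫ t in Ioi 0, frullaniKernel u t = log u := by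
  have hcont : Continuous fun t : ℝ => exp (-t) := by fun_prop
  have hzero : Tendsto (fun t : ℝ => exp (-t)) (𝓝[>] 0) (𝓝 1) := by
    simpa only [neg_zero, exp_zero] using (hcont.tendsto 0).mono_left nhdsWithin_le_nhds
  have h := Frullani.integral_Ioi_eq (a := 1) (b := u)
    (hcont.locallyIntegrable.locallyIntegrableOn _) one_pos hu hzero
    tendsto_exp_neg_atTop_nhds_zero
    (by simpa only [one_mul] using! integrableOn_frullaniKernel hu)
  simpa [frullaniKernel] using h

lemma integral_norm_frullaniKernel (hu : 0 < u) :
    ∫ t in Ioi 0, ‖frullaniKernel u t‖ = |log u| := by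
  rw [← integral_frullaniKernel hu]
  rcases le_total 1 u with h | h
  · have hsign : ∀ t ∈ Ioi (0 : ℝ), 0 ≤ frullaniKernel u t := fun t ht =>
      mul_nonneg (inv_nonneg.mpr (le_of_lt ht))
        (sub_nonneg.mpr (exp_le_exp.mpr (neg_le_neg (le_mul_of_one_le_left (le_of_lt ht) h))))
    rw [abs_of_nonneg (setIntegral_nonneg measurableSet_Ioi hsign)]
    exact setIntegral_congr_fun measurableSet_Ioi fun t ht => norm_of_nonneg (hsign t ht)
  · have hsign : ∀ t ∈ Ioi (0 : ℝ), frullaniKernel u t ≤ 0 := fun t ht =>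
      mul_nonpos_of_nonneg_of_nonpos (inv_nonneg.mpr (le_of_lt ht))
        (sub_nonpos.mpr (exp_le_exp.mpr (neg_le_neg (mul_le_of_le_one_left (le_of_lt ht) h))))
    rw [abs_of_nonpos (setIntegral_nonpos measurableSet_Ioi hsign), ← integral_neg]
    exact setIntegral_congr_fun measurableSet_Ioi fun t ht => norm_of_nonpos (hsign t ht)

end Frullani

section CovarianceLog

variable {Ω : Type*} [MeasurableSpace Ω] {μ : Measure Ω}

lemma memLp_exp_neg_of_ae_nonneg [IsFiniteMeasure μ] {X : Ω → ℝ} {p : ENNReal}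
    (hX : AEMeasurable X μ) (hX0 : ∀ᵐ ω ∂μ, 0 ≤ X ω) : MemLp (fun ω => exp (-X ω)) p μ := by
  refine .of_bound hX.neg.exp.aestronglyMeasurable 1 ?_
  filter_upwards [hX0] with ω hω
  rwa [norm_of_nonneg (exp_pos _).le, exp_le_one_iff, neg_nonpos]

lemma aemeasurable_of_aemeasurable_log {U : Ω → ℝ} (hU0 : ∀ᵐ ω ∂μ, 0 < U ω)
    (hU : AEMeasurable (fun ω => log (U ω)) μ) : AEMeasurable U μ :=
  hU.exp.congr (hU0.mono fun _ hω => exp_log hω)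

lemma aestronglyMeasurable_frullaniKernel {u t : Ω → ℝ} (hu : AEMeasurable u μ)
    (ht : AEMeasurable t μ) : AEStronglyMeasurable (fun ω => frullaniKernel (u ω) (t ω)) μ :=
  (measurable_uncurry_frullaniKernel.comp_aemeasurable (hu.prodMk ht)).aestronglyMeasurable

variable {U V : Ω → ℝ}

lemma integrable_frullaniKernel_prod [SFinite μ] (hU0 : ∀ᵐ ω ∂μ, 0 < U ω)
    (hU : Integrable (fun ω => log (U ω)) μ) :
    Integrable (Function.uncurry fun ω t => frullaniKernel (U ω) t)
      (μ.prod (volume.restrict (Ioi 0))) := by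
  have hUmeas : AEMeasurable U μ := aemeasurable_of_aemeasurable_log hU0 hU.aemeasurable
  have hmeas : AEStronglyMeasurable (Function.uncurry fun ω t => frullaniKernel (U ω) t)
      (μ.prod (volume.restrict (Ioi 0))) :=
    aestronglyMeasurable_frullaniKernel hUmeas.comp_fst measurable_snd.aemeasurable
  rw [integrable_prod_iff hmeas]
  refine ⟨hU0.mono fun ω hω => integrableOn_frullaniKernel hω, hU.norm.congr ?_⟩
  exact hU0.mono fun ω hω => (integral_norm_frullaniKernel hω).symm

lemma integrable_frullaniKernel_mul_frullaniKernel_prod [SFinite μ]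
    (hU0 : ∀ᵐ ω ∂μ, 0 < U ω) (hV0 : ∀ᵐ ω ∂μ, 0 < V ω)
    (hU : AEMeasurable U μ) (hV : AEMeasurable V μ)
    (hUV : Integrable (fun ω => log (U ω) * log (V ω)) μ) :
    Integrable (fun w : Ω × ℝ × ℝ => frullaniKernel (U w.1) w.2.1 * frullaniKernel (V w.1) w.2.2)
      (μ.prod ((volume.restrict (Ioi 0)).prod (volume.restrict (Ioi 0)))) := by
  have hmeas : AEStronglyMeasurable
      (fun w : Ω × ℝ × ℝ => frullaniKernel (U w.1) w.2.1 * frullaniKernel (V w.1) w.2.2)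
      (μ.prod ((volume.restrict (Ioi 0)).prod (volume.restrict (Ioi 0)))) :=
    (aestronglyMeasurable_frullaniKernel hU.comp_fst (by fun_prop)).mul
      (aestronglyMeasurable_frullaniKernel hV.comp_fst (by fun_prop))
  rw [integrable_prod_iff hmeas]
  refine ⟨?_, hUV.norm.congr ?_⟩
  · filter_upwards [hU0, hV0] with ω hUω hVω
    exact (integrableOn_frullaniKernel hUω).mul_prod (integrableOn_frullaniKernel hVω)
  · filter_upwards [hU0, hV0] with ω hUω hVω
    simp_rw [norm_mul]
    rw [integral_prod_mul (fun s => ‖frullaniKernel (U ω) s‖) (fun t => ‖frullaniKernel (V ω) t‖),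
      integral_norm_frullaniKernel hUω, integral_norm_frullaniKernel hVω, norm_eq_abs, norm_eq_abs]

lemma covariance_frullaniKernel [IsProbabilityMeasure μ]
    (hU0 : ∀ᵐ ω ∂μ, 0 < U ω) (hV0 : ∀ᵐ ω ∂μ, 0 < V ω)
    (hU : AEMeasurable U μ) (hV : AEMeasurable V μ) {s t : ℝ} (hs : 0 < s) (ht : 0 < t) :
    cov[fun ω => frullaniKernel (U ω) s, fun ω => frullaniKernel (V ω) t; μ]
      = s⁻¹ * t⁻¹ * cov[fun ω => exp (-(U ω * s)), fun ω => exp (-(V ω * t)); μ] := by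
  have hUexp : Integrable (fun ω => exp (-(U ω * s))) μ :=
    memLp_one_iff_integrable.mp <| memLp_exp_neg_of_ae_nonneg (hU.mul_const s) <|
      hU0.mono fun _ hω => (mul_pos hω hs).le
  have hVexp : Integrable (fun ω => exp (-(V ω * t))) μ :=
    memLp_one_iff_integrable.mp <| memLp_exp_neg_of_ae_nonneg (hV.mul_const t) <|
      hV0.mono fun _ hω => (mul_pos hω ht).le
  simp only [frullaniKernel]
  rw [covariance_const_mul_left, covariance_const_mul_right, covariance_const_sub_left hUexp,
    covariance_const_sub_right hVexp, neg_neg, mul_assoc]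

theorem covariance_log_log [IsProbabilityMeasure μ]
    (hU0 : ∀ᵐ ω ∂μ, 0 < U ω) (hV0 : ∀ᵐ ω ∂μ, 0 < V ω)
    (hU : MemLp (fun ω => log (U ω)) 2 μ) (hV : MemLp (fun ω => log (V ω)) 2 μ) :
    cov[fun ω => log (U ω), fun ω => log (V ω); μ]
      = ∫ z in Ioi 0 ×ˢ Ioi 0, z.1⁻¹ * z.2⁻¹ *
          cov[fun ω => exp (-(U ω * z.1)), fun ω => exp (-(V ω * z.2)); μ] := by
  have hUmeas : AEMeasurable U μ :=
    aemeasurable_of_aemeasurable_log hU0 hU.aestronglyMeasurable.aemeasurable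
  have hVmeas : AEMeasurable V μ :=
    aemeasurable_of_aemeasurable_log hV0 hV.aestronglyMeasurable.aemeasurable
  have hUlog : (fun ω => log (U ω)) =ᵐ[μ] fun ω => ∫ s in Ioi 0, frullaniKernel (U ω) s :=
    hU0.mono fun _ hω => (integral_frullaniKernel hω).symm
  have hVlog : (fun ω => log (V ω)) =ᵐ[μ] fun ω => ∫ t in Ioi 0, frullaniKernel (V ω) t :=
    hV0.mono fun _ hω => (integral_frullaniKernel hω).symm
  rw [covariance_congr_ae hUlog hVlog,
    covariance_integral_integral (integrable_frullaniKernel_prod hU0 (hU.integrable one_le_two))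
      (integrable_frullaniKernel_prod hV0 (hV.integrable one_le_two))
      (integrable_frullaniKernel_mul_frullaniKernel_prod hU0 hV0 hUmeas hVmeas
        (hU.integrable_mul hV)),
    Measure.prod_restrict, ← Measure.volume_eq_prod]
  exact setIntegral_congr_fun (measurableSet_Ioi.prod measurableSet_Ioi) fun z hz =>
    covariance_frullaniKernel hU0 hV0 hUmeas hVmeas hz.1 hz.2

lemma log_sq_div_two {x : ℝ} (hx : x ≠ 0) : log (x ^ 2 / 2) = 2 * log |x| - log 2 := by
  rw [log_div (pow_ne_zero 2 hx) two_ne_zero, log_pow, log_abs, Nat.cast_two]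

theorem four_mul_covariance_log_abs [IsProbabilityMeasure μ] {X Y : Ω → ℝ}
    (hX0 : ∀ᵐ ω ∂μ, X ω ≠ 0) (hY0 : ∀ᵐ ω ∂μ, Y ω ≠ 0)
    (hX : MemLp (fun ω => log |X ω|) 2 μ) (hY : MemLp (fun ω => log |Y ω|) 2 μ) :
    4 * cov[fun ω => log |X ω|, fun ω => log |Y ω|; μ]
      = ∫ z in Ioi 0 ×ˢ Ioi 0, z.1⁻¹ * z.2⁻¹ *
          cov[fun ω => exp (-(X ω ^ 2 / 2 * z.1)), fun ω => exp (-(Y ω ^ 2 / 2 * z.2)); μ] := by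
  have hXlog : (fun ω => 2 * log |X ω| - log 2) =ᵐ[μ] fun ω => log (X ω ^ 2 / 2) :=
    hX0.mono fun _ hω => (log_sq_div_two hω).symm
  have hYlog : (fun ω => 2 * log |Y ω| - log 2) =ᵐ[μ] fun ω => log (Y ω ^ 2 / 2) :=
    hY0.mono fun _ hω => (log_sq_div_two hω).symm
  have hX2 : MemLp (fun ω => 2 * log |X ω|) 2 μ := hX.const_mul 2
  have hY2 : MemLp (fun ω => 2 * log |Y ω|) 2 μ := hY.const_mul 2
  rw [← covariance_log_log (hX0.mono fun ω hω => by positivity) (hY0.mono fun ω hω => by positivity)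
      ((memLp_congr_ae hXlog).mp (hX2.sub (memLp_const _)))
      ((memLp_congr_ae hYlog).mp (hY2.sub (memLp_const _))),
    ← covariance_congr_ae hXlog hYlog, covariance_sub_const_left (hX2.integrable one_le_two),
    covariance_sub_const_right (hY2.integrable one_le_two), covariance_const_mul_left,
    covariance_const_mul_right]
  ring

end CovarianceLog

section GaussianLogAbs

lemma integral_stdGaussian (f : ℝ → ℝ) :
    ∫ x, f x ∂gaussianReal 0 1 = ∫ x, (√(2 * π))⁻¹ * exp (-x ^ 2 / 2) * f x := by
  rw [integral_gaussianReal_eq_integral_smul one_ne_zero]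
  simp [gaussianPDFReal]

lemma mgf_log_abs_gaussianReal {t : ℝ} (ht : -1 < t) :
    mgf (fun x => log |x|) (gaussianReal 0 1) t = 2 ^ (t / 2) * Gamma ((t + 1) / 2) / √π := by
  have heven : ∫ x : ℝ, (√(2 * π))⁻¹ * exp (-x ^ 2 / 2) * exp (t * log |x|)
      = 2 * ∫ x in Ioi 0, (√(2 * π))⁻¹ * exp (-x ^ 2 / 2) * exp (t * log x) := by
    rw [← integral_comp_abs
      (f := fun y => (√(2 * π))⁻¹ * exp (-y ^ 2 / 2) * exp (t * log y))]
    simp only [sq_abs]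
  have hrpow : ∀ x ∈ Ioi (0 : ℝ), (√(2 * π))⁻¹ * exp (-x ^ 2 / 2) * exp (t * log x)
      = (√(2 * π))⁻¹ * (x ^ t * exp (-(1 / 2) * x ^ (2 : ℝ))) := fun x hx => by
    rw [rpow_def_of_pos hx t, rpow_two, mul_comm (log x)]
    ring_nf
  have htwo : (1 / 2 : ℝ) ^ (-(t + 1) / 2) = 2 ^ (t / 2) * √2 := by
    rw [one_div, inv_rpow zero_le_two, neg_div, rpow_neg zero_le_two, inv_inv, add_div,
      rpow_add two_pos, sqrt_eq_rpow]
  have hsqrt : √(2 : ℝ) ≠ 0 := by positivity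
  rw [mgf, integral_stdGaussian, heven, setIntegral_congr_fun measurableSet_Ioi hrpow,
    integral_const_mul, integral_rpow_mul_exp_neg_mul_rpow two_pos ht one_half_pos, htwo,
    sqrt_mul zero_le_two]
  field_simp

lemma mgf_log_abs_gaussianReal_eventuallyEq :
    mgf (fun x => log |x|) (gaussianReal 0 1)
      =ᶠ[𝓝 0] fun t => 2 ^ (t / 2) * Gamma ((t + 1) / 2) / √π :=
  (eventually_gt_nhds neg_one_lt_zero).mono fun _ => mgf_log_abs_gaussianReal

lemma zero_mem_interior_integrableExpSet_log_abs :
    0 ∈ interior (integrableExpSet (fun x => log |x|) (gaussianReal 0 1)) := by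
  rw [mem_interior_iff_mem_nhds]
  filter_upwards [eventually_gt_nhds (neg_one_lt_zero (R := ℝ))] with t ht
  have hGamma : 0 < Gamma ((t + 1) / 2) := Gamma_pos_of_pos (by linarith)
  refine mgf_pos_iff.mp ?_
  rw [mgf_log_abs_gaussianReal ht]
  positivity

lemma memLp_log_abs_gaussianReal (p : NNReal) :
    MemLp (fun x => log |x|) p (gaussianReal 0 1) :=
  memLp_of_mem_interior_integrableExpSet zero_mem_interior_integrableExpSet_log_abs p

lemma integral_log_abs_gaussianReal :
    ∫ x, log |x| ∂gaussianReal 0 1 = -(log 2 + eulerMascheroniConstant) / 2 := by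
  have hpow : HasDerivAt (fun t : ℝ => (2 : ℝ) ^ (t / 2)) (log 2 / 2) 0 :=
    (((hasDerivAt_id (0 : ℝ)).div_const 2).const_rpow two_pos).congr_deriv (by simp; ring)
  have hGamma : HasDerivAt (fun t : ℝ => Gamma ((t + 1) / 2))
      (-√π * (eulerMascheroniConstant + 2 * log 2) / 2) 0 := by
    have hinner : HasDerivAt (fun t : ℝ => (t + 1) / 2) (1 / 2) 0 :=
      ((hasDerivAt_id (0 : ℝ)).add_const 1).div_const 2
    exact (hasDerivAt_Gamma_one_half.comp_of_eq 0 hinner (by norm_num)).congr_deriv (by ring)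
  have hsqrt : √π ≠ 0 := by positivity
  rw [← deriv_mgf_zero zero_mem_interior_integrableExpSet_log_abs,
    mgf_log_abs_gaussianReal_eventuallyEq.deriv_eq, ((hpow.fun_mul hGamma).div_const √π).deriv,
    zero_div, zero_add, rpow_zero, Gamma_one_half_eq]
  field_simp
  ring

end GaussianLogAbs

section GaussianPair

/-- The joint law of two independent standard normal variables, i.e. the law of the pair `(X, Z)`
out of which the correlated variable `Y = r X + q Z` is built. -/
noncomputable abbrev stdGaussianPair : Measure (ℝ × ℝ) :=
  (gaussianReal 0 1).prod (gaussianReal 0 1)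

lemma measurePreserving_linear_gaussianReal (v : NNReal) {r q : ℝ} (hrq : r ^ 2 + q ^ 2 = 1) :
    MeasurePreserving (fun p : ℝ × ℝ => r * p.1 + q * p.2)
      ((gaussianReal 0 v).prod (gaussianReal 0 v)) (gaussianReal 0 v) := by
  refine ⟨by fun_prop, ?_⟩
  calc Measure.map (fun p : ℝ × ℝ => r * p.1 + q * p.2)
        ((gaussianReal 0 v).prod (gaussianReal 0 v))
      = (gaussianReal 0 v).map (r * ·) ∗ (gaussianReal 0 v).map (q * ·) := by
        rw [Measure.conv, Measure.map_prod_map _ _ (by fun_prop) (by fun_prop),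
          Measure.map_map (by fun_prop) (by fun_prop)]
        rfl
    _ = gaussianReal 0 v := by
        rw [gaussianReal_map_const_mul, gaussianReal_map_const_mul, gaussianReal_conv_gaussianReal,
          mul_zero, mul_zero, add_zero, ← add_mul]
        have hone : NNReal.mk (r ^ 2) (sq_nonneg r) + NNReal.mk (q ^ 2) (sq_nonneg q) = 1 :=
          NNReal.eq hrq
        rw [hone, one_mul]

lemma ae_ne_zero_gaussianReal : ∀ᵐ x ∂gaussianReal 0 1, x ≠ 0 :=
  have := nullSingletonClass_gaussianReal (μ := 0) (v := 1) one_ne_zero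
  Measure.ae_ne _ 0

lemma integral_exp_neg_quadratic_gaussianReal {a : ℝ} (ha : -1 < a) (c : ℝ) :
    ∫ x, exp (-(a / 2 * x ^ 2 + c * x)) ∂gaussianReal 0 1
      = (√(1 + a))⁻¹ * exp (c ^ 2 / (2 * (1 + a))) := by
  have ha' : 0 < 1 + a := by linarith
  have hsquare : ∀ x : ℝ,
      (√(2 * π))⁻¹ * exp (-x ^ 2 / 2) * exp (-(a / 2 * x ^ 2 + c * x))
        = (√(2 * π))⁻¹ * exp (c ^ 2 / (2 * (1 + a)))
          * exp (-((1 + a) / 2) * (x + c / (1 + a)) ^ 2) := fun x => by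
    rw [mul_assoc, mul_assoc, ← exp_add, ← exp_add]
    congr 2
    field_simp
    ring
  have hvar : π / ((1 + a) / 2) = 2 * π / (1 + a) := by field_simp
  have hsqrt : √(2 * π) ≠ 0 := by positivity
  simp_rw [integral_stdGaussian, hsquare]
  rw [integral_const_mul, integral_add_right_eq_self (fun x => exp (-((1 + a) / 2) * x ^ 2)),
    integral_gaussian, hvar, sqrt_div (by positivity)]
  field_simp

lemma integral_exp_neg_sq_gaussianReal {s : ℝ} (hs : -1 < s) :
    ∫ x, exp (-(x ^ 2 / 2 * s)) ∂gaussianReal 0 1 = (√(1 + s))⁻¹ := by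
  have hform : ∀ x : ℝ, x ^ 2 / 2 * s = s / 2 * x ^ 2 + 0 * x := fun x => by ring
  simp_rw [hform]
  rw [integral_exp_neg_quadratic_gaussianReal hs, zero_pow two_ne_zero, zero_div, exp_zero,
    mul_one]

variable {r q s t : ℝ}

lemma memLp_exp_neg_sq_stdGaussianPair {f : ℝ × ℝ → ℝ} (hf : Measurable f) (hs : 0 ≤ s)
    (p : ENNReal) : MemLp (fun w => exp (-(f w ^ 2 / 2 * s))) p stdGaussianPair :=
  memLp_exp_neg_of_ae_nonneg (by fun_prop) (ae_of_all _ fun w => by positivity)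

lemma integral_exp_neg_sq_mul_exp_neg_sq_gaussianReal (r q s x : ℝ) (ht : 0 ≤ t) :
    ∫ z, exp (-(x ^ 2 / 2 * s)) * exp (-((r * x + q * z) ^ 2 / 2 * t)) ∂gaussianReal 0 1
      = (√(1 + t * q ^ 2))⁻¹ * exp (-(x ^ 2 / 2 * (s + t * r ^ 2 / (1 + t * q ^ 2)))) := by
  have hsplit : ∀ z : ℝ, exp (-(x ^ 2 / 2 * s)) * exp (-((r * x + q * z) ^ 2 / 2 * t))
      = exp (-((s + t * r ^ 2) / 2 * x ^ 2))
        * exp (-(t * q ^ 2 / 2 * z ^ 2 + t * r * q * x * z)) := fun z => by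
    rw [← exp_add, ← exp_add]
    ring_nf
  have htq : -1 < t * q ^ 2 := neg_one_lt_zero.trans_le (by positivity)
  simp_rw [hsplit]
  rw [integral_const_mul, integral_exp_neg_quadratic_gaussianReal htq, mul_left_comm, ← exp_add]
  congr 2
  field_simp
  ring

lemma integral_exp_neg_sq_mul_exp_neg_sq_stdGaussianPair (hrq : r ^ 2 + q ^ 2 = 1) (hs : 0 ≤ s)
    (ht : 0 ≤ t) :
    ∫ p, exp (-(p.1 ^ 2 / 2 * s)) * exp (-((r * p.1 + q * p.2) ^ 2 / 2 * t)) ∂stdGaussianPair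
      = (√((1 + s) * (1 + t) - s * t * r ^ 2))⁻¹ := by
  have hint : Integrable (fun p : ℝ × ℝ => exp (-(p.1 ^ 2 / 2 * s))
      * exp (-((r * p.1 + q * p.2) ^ 2 / 2 * t))) stdGaussianPair :=
    (memLp_exp_neg_sq_stdGaussianPair measurable_fst hs 2).integrable_mul
      (memLp_exp_neg_sq_stdGaussianPair (by fun_prop) ht 2)
  have hs' : -1 < s + t * r ^ 2 / (1 + t * q ^ 2) := neg_one_lt_zero.trans_le (by positivity)
  have hdet : (1 + t * q ^ 2) * (1 + (s + t * r ^ 2 / (1 + t * q ^ 2)))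
      = (1 + s) * (1 + t) - s * t * r ^ 2 := by
    have htq : 1 + t * q ^ 2 ≠ 0 := by positivity
    rw [mul_add, mul_add, mul_div_cancel₀ _ htq]
    linear_combination (t + s * t) * hrq
  rw [integral_prod _ hint]
  simp_rw [integral_exp_neg_sq_mul_exp_neg_sq_gaussianReal r q s _ ht]
  rw [integral_const_mul, integral_exp_neg_sq_gaussianReal hs', ← mul_inv,
    ← sqrt_mul (by positivity), hdet]

lemma covariance_exp_neg_sq_stdGaussianPair (hrq : r ^ 2 + q ^ 2 = 1) (hs : 0 ≤ s) (ht : 0 ≤ t) :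
    cov[fun p : ℝ × ℝ => exp (-(p.1 ^ 2 / 2 * s)),
        fun p => exp (-((r * p.1 + q * p.2) ^ 2 / 2 * t)); stdGaussianPair]
      = (√((1 + s) * (1 + t) - s * t * r ^ 2))⁻¹ - (√((1 + s) * (1 + t)))⁻¹ := by
  have hX : ∫ p, exp (-(p.1 ^ 2 / 2 * s)) ∂stdGaussianPair = (√(1 + s))⁻¹ := by
    rw [integral_fun_fst (fun x : ℝ => exp (-(x ^ 2 / 2 * s))), probReal_univ, one_smul,
      integral_exp_neg_sq_gaussianReal (neg_one_lt_zero.trans_le hs)]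
  have hY : ∫ p, exp (-((r * p.1 + q * p.2) ^ 2 / 2 * t)) ∂stdGaussianPair = (√(1 + t))⁻¹ := by
    have hY_law := measurePreserving_linear_gaussianReal 1 hrq
    rw [← integral_exp_neg_sq_gaussianReal (neg_one_lt_zero.trans_le ht), ← hY_law.map_eq,
      integral_map hY_law.aemeasurable (by fun_prop)]
  rw [covariance_eq_sub (memLp_exp_neg_sq_stdGaussianPair measurable_fst hs 2)
      (memLp_exp_neg_sq_stdGaussianPair (by fun_prop) ht 2), hX, hY, sqrt_mul (by positivity),
    mul_inv]
  congr 1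
  exact integral_exp_neg_sq_mul_exp_neg_sq_stdGaussianPair hrq hs ht

end GaussianPair

section InvSqrtSeries

lemma ascPochhammer_eval_one_half (n : ℕ) :
    (ascPochhammer ℝ n).eval (1 / 2) = n ! * (n.centralBinom / 4 ^ n) := by
  induction n with
  | zero => simp
  | succ n ih =>
    have hrec : ((n : ℝ) + 1) * (n + 1).centralBinom = 2 * (2 * n + 1) * n.centralBinom := by
      exact_mod_cast n.succ_mul_centralBinom_succ
    rw [ascPochhammer_succ_eval, ih, Nat.factorial_succ, Nat.cast_mul, Nat.cast_succ, pow_succ]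
    field_simp
    linear_combination -(2 : ℝ) * hrec

lemma ringChoose_one_half_add_sub_one (n : ℕ) :
    Ring.choose ((1 / 2 : ℝ) + n - 1) n = n.centralBinom / 4 ^ n := by
  have hfact : (n ! : ℝ) ≠ 0 := by positivity
  have h := Ring.factorial_nsmul_multichoose_eq_ascPochhammer (1 / 2 : ℝ) n
  rw [nsmul_eq_mul, Polynomial.ascPochhammer_smeval_eq_eval, ascPochhammer_eval_one_half,
    Ring.multichoose_eq] at h
  exact mul_left_cancel₀ hfact h

lemma hasSum_centralBinom_div_mul_pow {x : ℝ} (hx : |x| < 1) :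
    HasSum (fun n : ℕ => n.centralBinom / 4 ^ n * x ^ n) (√(1 - x))⁻¹ := by
  have hball : x ∈ Metric.eball (0 : ℝ) 1 := by
    rw [Metric.mem_eball, edist_zero_right, ← ofReal_norm, norm_eq_abs]
    exact ENNReal.ofReal_lt_one.mpr hx
  have h := (one_div_one_sub_rpow_hasFPowerSeriesOnBall_zero (1 / 2)).hasSum hball
  simp only [FormalMultilinearSeries.ofScalars_apply_eq, zero_add,
    ringChoose_one_half_add_sub_one, smul_eq_mul, ← sqrt_eq_rpow] at h
  rwa [one_div] at h

lemma hasSum_centralBinom_div_mul_pow_succ {x : ℝ} (hx : |x| < 1) :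
    HasSum (fun n : ℕ => (n + 1).centralBinom / 4 ^ (n + 1) * x ^ (n + 1)) ((√(1 - x))⁻¹ - 1) := by
  simpa using (hasSum_nat_add_iff' 1).mpr (hasSum_centralBinom_div_mul_pow hx)

end InvSqrtSeries

section BetaPrime

/-- The unnormalised beta prime density with parameters `n + 1` and `1 / 2`, i.e.
`sⁿ (1 + s) ^ (-(n + 3 / 2))`: the function of `s` multiplying the power `r ^ (2 * (n + 1))` once
the covariance of the Gaussian exponentials is expanded in powers of `r`. -/
noncomputable def betaPrimeKernel (n : ℕ) (s : ℝ) : ℝ := s ^ n / ((1 + s) ^ (n + 1) * √(1 + s))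

variable {s : ℝ}

lemma betaPrimeKernel_nonneg (n : ℕ) (hs : 0 ≤ s) : 0 ≤ betaPrimeKernel n s := by
  unfold betaPrimeKernel
  positivity

lemma hasDerivAt_inv_sqrt_one_add (hs : -1 < s) :
    HasDerivAt (fun s : ℝ => (√(1 + s))⁻¹) (-((1 + s) * √(1 + s))⁻¹ / 2) s := by
  have hs' : 0 < 1 + s := by linarith
  refine ((((hasDerivAt_id s).const_add 1).sqrt hs'.ne').fun_inv (by positivity)).congr_deriv ?_
  rw [id_eq, sq_sqrt hs'.le]
  field_simp

lemma tendsto_inv_sqrt_one_add : Tendsto (fun s : ℝ => (√(1 + s))⁻¹) atTop (𝓝 0) :=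
  (tendsto_sqrt_atTop.comp (tendsto_atTop_add_const_left _ 1 tendsto_id)).inv_tendsto_atTop

lemma hasDerivAt_betaPrimeKernel_zero (hs : -1 < s) :
    HasDerivAt (fun s : ℝ => -2 * (√(1 + s))⁻¹) (betaPrimeKernel 0 s) s := by
  refine ((hasDerivAt_inv_sqrt_one_add hs).const_mul (-2)).congr_deriv ?_
  rw [betaPrimeKernel, pow_zero, zero_add, pow_one, one_div]
  ring

lemma integrableOn_betaPrimeKernel_zero : IntegrableOn (betaPrimeKernel 0) (Ioi 0) :=
  integrableOn_Ioi_deriv_of_nonneg'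
    (fun _ hs => hasDerivAt_betaPrimeKernel_zero (neg_one_lt_zero.trans_le hs))
    (fun _ hs => betaPrimeKernel_nonneg 0 (le_of_lt hs)) (tendsto_inv_sqrt_one_add.const_mul (-2))

lemma integral_betaPrimeKernel_zero : ∫ s in Ioi 0, betaPrimeKernel 0 s = 2 := by
  rw [integral_Ioi_of_hasDerivAt_of_tendsto'
    (fun _ hs => hasDerivAt_betaPrimeKernel_zero (neg_one_lt_zero.trans_le hs))
    integrableOn_betaPrimeKernel_zero (tendsto_inv_sqrt_one_add.const_mul (-2))]
  simp

lemma betaPrimeKernel_le_zero (n : ℕ) (hs : 0 ≤ s) :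
    betaPrimeKernel n s ≤ betaPrimeKernel 0 s := by
  have hpow : s ^ n ≤ (1 + s) ^ n := by gcongr; linarith
  simp only [betaPrimeKernel, pow_zero, zero_add, pow_one]
  rw [div_le_div_iff₀ (by positivity) (by positivity), one_mul, pow_succ, mul_assoc]
  gcongr

lemma integrableOn_betaPrimeKernel (n : ℕ) : IntegrableOn (betaPrimeKernel n) (Ioi 0) := by
  have hmeas : Measurable (betaPrimeKernel n) := by
    unfold betaPrimeKernel
    fun_prop
  refine integrableOn_betaPrimeKernel_zero.mono' hmeas.aestronglyMeasurable ?_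
  filter_upwards [ae_restrict_mem measurableSet_Ioi] with s hs
  rw [norm_of_nonneg (betaPrimeKernel_nonneg n (le_of_lt hs))]
  exact betaPrimeKernel_le_zero n (le_of_lt hs)

lemma hasDerivAt_pow_div_mul_inv_sqrt (n : ℕ) (hs : -1 < s) :
    HasDerivAt (fun s : ℝ => (s / (1 + s)) ^ (n + 1) * (√(1 + s))⁻¹)
      ((n + 1) * betaPrimeKernel n s - (n + 3 / 2) * betaPrimeKernel (n + 1) s) s := by
  have hs' : 0 < 1 + s := by linarith
  have hquot := (hasDerivAt_id s).fun_div ((hasDerivAt_id s).const_add 1) hs'.ne'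
  refine ((hquot.fun_pow (n + 1)).fun_mul (hasDerivAt_inv_sqrt_one_add hs)).congr_deriv ?_
  simp only [betaPrimeKernel, id_eq, add_tsub_cancel_right, Nat.cast_add, Nat.cast_one, div_pow]
  field_simp
  ring

lemma tendsto_pow_div_mul_inv_sqrt (n : ℕ) :
    Tendsto (fun s : ℝ => (s / (1 + s)) ^ n * (√(1 + s))⁻¹) atTop (𝓝 0) := by
  refine squeeze_zero' ?_ ?_ tendsto_inv_sqrt_one_add
  all_goals filter_upwards [eventually_ge_atTop 0] with s hs
  · positivity
  · refine mul_le_of_le_one_left (by positivity) (pow_le_one₀ (by positivity) ?_)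
    exact div_le_one_of_le₀ (by linarith) (by positivity)

lemma integral_betaPrimeKernel_succ (n : ℕ) :
    (n + 3 / 2) * ∫ s in Ioi 0, betaPrimeKernel (n + 1) s
      = (n + 1) * ∫ s in Ioi 0, betaPrimeKernel n s := by
  have hleft := (integrableOn_betaPrimeKernel n).const_mul ((n : ℝ) + 1)
  have hright := (integrableOn_betaPrimeKernel (n + 1)).const_mul ((n : ℝ) + 3 / 2)
  have h := integral_Ioi_of_hasDerivAt_of_tendsto'
    (fun _ hs => hasDerivAt_pow_div_mul_inv_sqrt n (neg_one_lt_zero.trans_le hs))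
    (hleft.sub hright) (tendsto_pow_div_mul_inv_sqrt (n + 1))
  rw [integral_sub hleft hright, integral_const_mul, integral_const_mul, zero_div,
    zero_pow n.succ_ne_zero, zero_mul, sub_zero] at h
  linarith

lemma integral_betaPrimeKernel (n : ℕ) :
    ∫ s in Ioi 0, betaPrimeKernel n s = 2 * 4 ^ n * (n ! : ℝ) ^ 2 / (2 * n + 1)! := by
  induction n with
  | zero => simp [integral_betaPrimeKernel_zero]
  | succ n ih =>
    have hfact : ((2 * (n + 1) + 1)! : ℝ) = (2 * n + 3) * (2 * n + 2) * (2 * n + 1)! := by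
      rw [show 2 * (n + 1) + 1 = 2 * n + 1 + 1 + 1 by ring, Nat.factorial_succ, Nat.factorial_succ]
      push_cast
      ring
    have hpos : (n : ℝ) + 3 / 2 ≠ 0 := by positivity
    refine mul_left_cancel₀ hpos ?_
    rw [integral_betaPrimeKernel_succ, ih, hfact, n.factorial_succ, Nat.cast_mul, Nat.cast_succ]
    field_simp
    ring

end BetaPrime

section LogCovariance

/-- The coefficient of `r ^ (2 * (n + 1))` in the covariance of `log |X|` and `log |Y|` for standard
normal variables of correlation `r`: with `k = n + 1` this is `ν₂ₖ² / (2k)!`, where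
`ν₂ₖ = 2 ^ (k - 1) * (k - 1)!`. -/
noncomputable def logCovCoeff (n : ℕ) : ℝ := ((2 : ℝ) ^ n * n !) ^ 2 / (2 * (n + 1))!

lemma logCovCoeff_nonneg (n : ℕ) : 0 ≤ logCovCoeff n := by
  unfold logCovCoeff
  positivity

lemma logCovCoeff_succ (n : ℕ) :
    (n + 2) * logCovCoeff (n + 1) = 2 * (n + 1) ^ 2 / (2 * n + 3) * logCovCoeff n := by
  have hfact : ((2 * (n + 1 + 1))! : ℝ) = (2 * n + 4) * (2 * n + 3) * (2 * (n + 1))! := by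
    rw [show 2 * (n + 1 + 1) = 2 * (n + 1) + 1 + 1 by ring, Nat.factorial_succ, Nat.factorial_succ]
    push_cast
    ring
  rw [logCovCoeff, logCovCoeff, hfact, n.factorial_succ, pow_succ, Nat.cast_mul, Nat.cast_succ]
  field_simp
  ring

-- Raabe: consecutive coefficients have ratio `1 - 3 / (2 n) + O(n⁻²)`, so they do not decay
-- geometrically, but `(n + 1) * logCovCoeff n` telescopes.
lemma logCovCoeff_le_sub (n : ℕ) :
    logCovCoeff n ≤ 3 * ((n + 1) * logCovCoeff n) - 3 * ((n + 2) * logCovCoeff (n + 1)) := by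
  have hratio : (1 : ℝ) ≤ 3 * (n + 1) - 3 * (2 * (n + 1) ^ 2 / (2 * n + 3)) := by
    have h : 3 * (n + 1 : ℝ) - 3 * (2 * (n + 1) ^ 2 / (2 * n + 3)) = 1 + n / (2 * n + 3) := by
      field_simp
      ring
    rw [h]
    exact le_add_of_nonneg_right (by positivity)
  calc logCovCoeff n = 1 * logCovCoeff n := (one_mul _).symm
    _ ≤ (3 * (n + 1) - 3 * (2 * (n + 1) ^ 2 / (2 * n + 3))) * logCovCoeff n :=
      mul_le_mul_of_nonneg_right hratio (logCovCoeff_nonneg n)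
    _ = _ := by rw [logCovCoeff_succ]; ring

lemma summable_logCovCoeff : Summable logCovCoeff := by
  refine summable_of_sum_range_le (c := 3 * logCovCoeff 0) logCovCoeff_nonneg fun N => ?_
  calc ∑ n ∈ Finset.range N, logCovCoeff n
      ≤ ∑ n ∈ Finset.range N,
          (3 * ((n + 1) * logCovCoeff n) - 3 * ((n + 2) * logCovCoeff (n + 1))) :=
        Finset.sum_le_sum fun n _ => logCovCoeff_le_sub n
    _ = 3 * logCovCoeff 0 - 3 * ((N + 1) * logCovCoeff N) := by
        have h := Finset.sum_range_sub' (fun n : ℕ => 3 * ((n + 1) * logCovCoeff n)) N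
        simpa [add_assoc, one_add_one_eq_two] using h
    _ ≤ 3 * logCovCoeff 0 := by
        have := logCovCoeff_nonneg N
        exact sub_le_self _ (by positivity)

lemma centralBinom_div_mul_integral_betaPrimeKernel_sq (n : ℕ) :
    (n + 1).centralBinom / 4 ^ (n + 1) * (∫ s in Ioi 0, betaPrimeKernel n s) ^ 2
      = 4 * logCovCoeff n := by
  have hchoose : ((n + 1).centralBinom : ℝ) * ((n + 1) * n !) ^ 2 = (2 * (n + 1))! := by
    have h := Nat.choose_mul_factorial_mul_factorial (Nat.le_mul_of_pos_left (n + 1) two_pos)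
    rw [← Nat.centralBinom_eq_two_mul_choose, two_mul, Nat.add_sub_cancel, ← two_mul,
      n.factorial_succ, mul_assoc, ← sq] at h
    exact_mod_cast h
  have hfact : ((2 * (n + 1))! : ℝ) = 2 * (n + 1) * (2 * n + 1)! := by
    rw [show 2 * (n + 1) = 2 * n + 1 + 1 by ring, Nat.factorial_succ]
    push_cast
    ring
  rw [integral_betaPrimeKernel, logCovCoeff, eq_div_of_mul_eq (by positivity) hchoose, hfact,
    pow_succ 4, show (4 : ℝ) ^ n = 2 ^ n * 2 ^ n by rw [← mul_pow]; norm_num]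
  field_simp
  ring

variable {r s t : ℝ}

lemma summable_logCovCoeff_mul_pow (hr : r ^ 2 ≤ 1) :
    Summable fun n : ℕ => logCovCoeff n * r ^ (2 * (n + 1)) := by
  refine summable_logCovCoeff.of_nonneg_of_le (fun n => ?_) fun n => ?_
  all_goals have := logCovCoeff_nonneg n; rw [pow_mul]
  · positivity
  · exact mul_le_of_le_one_right this (pow_le_one₀ (sq_nonneg r) hr)

lemma mul_mul_sq_div_lt_one (hs : 0 ≤ s) (ht : 0 ≤ t) (hr : r ^ 2 ≤ 1) :
    s * t * r ^ 2 / ((1 + s) * (1 + t)) < 1 := by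
  rw [div_lt_one (by positivity)]
  calc s * t * r ^ 2 ≤ s * t := mul_le_of_le_one_right (by positivity) hr
    _ < (1 + s) * (1 + t) := by linarith

lemma hasSum_betaPrimeKernel_mul_betaPrimeKernel (hs : 0 < s) (ht : 0 < t) (hr : r ^ 2 ≤ 1) :
    HasSum (fun n : ℕ => (n + 1).centralBinom / 4 ^ (n + 1) * r ^ (2 * (n + 1)) *
        (betaPrimeKernel n s * betaPrimeKernel n t))
      (s⁻¹ * t⁻¹ * ((√((1 + s) * (1 + t) - s * t * r ^ 2))⁻¹ - (√((1 + s) * (1 + t)))⁻¹)) := by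
  set x : ℝ := s * t * r ^ 2 / ((1 + s) * (1 + t)) with hx
  have hx0 : 0 ≤ x := by positivity
  have hx1 : |x| < 1 := by
    rw [abs_of_nonneg hx0]
    exact mul_mul_sq_div_lt_one hs.le ht.le hr
  have hterm (n : ℕ) : (n + 1).centralBinom / 4 ^ (n + 1) * r ^ (2 * (n + 1)) *
      (betaPrimeKernel n s * betaPrimeKernel n t)
        = s⁻¹ * t⁻¹ * (√((1 + s) * (1 + t)))⁻¹ *
          ((n + 1).centralBinom / 4 ^ (n + 1) * x ^ (n + 1)) := by
    rw [hx, betaPrimeKernel, betaPrimeKernel, sqrt_mul (by positivity), div_pow, mul_pow, mul_pow,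
      mul_pow, pow_mul]
    field_simp
    ring
  have hdet : (1 + s) * (1 + t) - s * t * r ^ 2 = (1 + s) * (1 + t) * (1 - x) := by
    rw [hx]
    field_simp
  have hvalue : s⁻¹ * t⁻¹ * ((√((1 + s) * (1 + t) - s * t * r ^ 2))⁻¹ - (√((1 + s) * (1 + t)))⁻¹)
      = s⁻¹ * t⁻¹ * (√((1 + s) * (1 + t)))⁻¹ * ((√(1 - x))⁻¹ - 1) := by
    rw [hdet, sqrt_mul (by positivity), mul_inv]
    ring
  rw [hvalue]
  simp_rw [hterm]
  exact (hasSum_centralBinom_div_mul_pow_succ hx1).mul_left _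

lemma integral_tsum_betaPrimeKernel (hr : r ^ 2 ≤ 1) :
    ∫ z in Ioi 0 ×ˢ Ioi 0, ∑' n : ℕ, (n + 1).centralBinom / 4 ^ (n + 1) * r ^ (2 * (n + 1)) *
        (betaPrimeKernel n z.1 * betaPrimeKernel n z.2)
      = 4 * ∑' n : ℕ, logCovCoeff n * r ^ (2 * (n + 1)) := by
  set F : ℕ → ℝ × ℝ → ℝ := fun n z => (n + 1).centralBinom / 4 ^ (n + 1) * r ^ (2 * (n + 1)) *
    (betaPrimeKernel n z.1 * betaPrimeKernel n z.2) with hF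
  have hF_integrable (n : ℕ) : IntegrableOn (F n) (Ioi 0 ×ˢ Ioi 0) := by
    rw [IntegrableOn, Measure.volume_eq_prod, ← Measure.prod_restrict]
    exact ((integrableOn_betaPrimeKernel n).mul_prod (integrableOn_betaPrimeKernel n)).const_mul _
  have hF_integral (n : ℕ) :
      ∫ z in Ioi 0 ×ˢ Ioi 0, F n z = 4 * (logCovCoeff n * r ^ (2 * (n + 1))) := by
    rw [hF, integral_const_mul, Measure.volume_eq_prod,
      setIntegral_prod_mul (betaPrimeKernel n) (betaPrimeKernel n)]
    linear_combination r ^ (2 * (n + 1)) * centralBinom_div_mul_integral_betaPrimeKernel_sq n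
  have hF_norm (n : ℕ) : ∫ z in Ioi 0 ×ˢ Ioi 0, ‖F n z‖ = ∫ z in Ioi 0 ×ˢ Ioi 0, F n z := by
    refine setIntegral_congr_fun (measurableSet_Ioi.prod measurableSet_Ioi) fun z hz => ?_
    have hz1 := betaPrimeKernel_nonneg n (le_of_lt hz.1)
    have hz2 := betaPrimeKernel_nonneg n (le_of_lt hz.2)
    refine norm_of_nonneg ?_
    simp only [hF, pow_mul]
    positivity
  have hsummable : Summable fun n => ∫ z in Ioi 0 ×ˢ Ioi 0, ‖F n z‖ := by
    simp_rw [hF_norm, hF_integral]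
    exact (summable_logCovCoeff_mul_pow hr).mul_left 4
  rw [← integral_tsum_of_summable_integral_norm hF_integrable hsummable]
  simp_rw [hF_integral]
  rw [tsum_mul_left]

variable {q : ℝ}

lemma memLp_log_abs_fst_stdGaussianPair :
    MemLp (fun p : ℝ × ℝ => log |p.1|) 2 stdGaussianPair :=
  (memLp_log_abs_gaussianReal 2).comp_measurePreserving measurePreserving_fst

lemma memLp_log_abs_linear_stdGaussianPair (hrq : r ^ 2 + q ^ 2 = 1) :
    MemLp (fun p : ℝ × ℝ => log |r * p.1 + q * p.2|) 2 stdGaussianPair :=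
  (memLp_log_abs_gaussianReal 2).comp_measurePreserving
    (measurePreserving_linear_gaussianReal 1 hrq)

theorem covariance_log_abs_stdGaussianPair (hrq : r ^ 2 + q ^ 2 = 1) :
    cov[fun p : ℝ × ℝ => log |p.1|, fun p => log |r * p.1 + q * p.2|; stdGaussianPair]
      = ∑' n : ℕ, logCovCoeff n * r ^ (2 * (n + 1)) := by
  have hr : r ^ 2 ≤ 1 := hrq ▸ le_add_of_nonneg_right (sq_nonneg q)
  have hX0 : ∀ᵐ p : ℝ × ℝ ∂stdGaussianPair, p.1 ≠ 0 :=
    Measure.quasiMeasurePreserving_fst.ae ae_ne_zero_gaussianReal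
  have hY0 : ∀ᵐ p : ℝ × ℝ ∂stdGaussianPair, r * p.1 + q * p.2 ≠ 0 :=
    (measurePreserving_linear_gaussianReal 1 hrq).quasiMeasurePreserving.ae ae_ne_zero_gaussianReal
  refine mul_left_cancel₀ four_ne_zero ?_
  rw [four_mul_covariance_log_abs hX0 hY0 memLp_log_abs_fst_stdGaussianPair
    (memLp_log_abs_linear_stdGaussianPair hrq), ← integral_tsum_betaPrimeKernel hr]
  refine setIntegral_congr_fun (measurableSet_Ioi.prod measurableSet_Ioi) fun z hz => ?_
  simp only [covariance_exp_neg_sq_stdGaussianPair hrq (le_of_lt hz.1) (le_of_lt hz.2)]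
  exact (hasSum_betaPrimeKernel_mul_betaPrimeKernel hz.1 hz.2 hr).tsum_eq.symm

theorem integral_log_abs_mul_log_abs_stdGaussianPair (hrq : r ^ 2 + q ^ 2 = 1) :
    ∫ p, log |p.1| * log |r * p.1 + q * p.2| ∂stdGaussianPair
      = (-(log 2 + eulerMascheroniConstant) / 2) ^ 2
        + ∑' n : ℕ, logCovCoeff n * r ^ (2 * (n + 1)) := by
  have hX : ∫ p, log |p.1| ∂stdGaussianPair = -(log 2 + eulerMascheroniConstant) / 2 := by
    rw [integral_fun_fst (fun x : ℝ => log |x|), probReal_univ, one_smul,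
      integral_log_abs_gaussianReal]
  have hY : ∫ p, log |r * p.1 + q * p.2| ∂stdGaussianPair
      = -(log 2 + eulerMascheroniConstant) / 2 := by
    have hY_law := measurePreserving_linear_gaussianReal 1 hrq
    have hlog : Measurable fun y : ℝ => log |y| := by fun_prop
    rw [← integral_log_abs_gaussianReal, ← hY_law.map_eq,
      integral_map hY_law.aemeasurable hlog.aestronglyMeasurable]
  have hcov := covariance_eq_sub memLp_log_abs_fst_stdGaussianPair
    (memLp_log_abs_linear_stdGaussianPair hrq)
  rw [covariance_log_abs_stdGaussianPair hrq, hX, hY] at hcov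
  rw [hcov, ← sq]
  exact (add_sub_cancel _ _).symm

end LogCovariance

lemma integral_integral_mul_gaussian_density {f : ℝ → ℝ → ℝ}
    (hf : Integrable (Function.uncurry f) stdGaussianPair) :
    ∫ x, ∫ z, f x z * ((2 * π) ^ (-(1 : ℝ) / 2) * exp (-x ^ 2 / 2))
        * ((2 * π) ^ (-(1 : ℝ) / 2) * exp (-z ^ 2 / 2))
      = ∫ p, f p.1 p.2 ∂stdGaussianPair := by
  have hconst : (2 * π) ^ (-(1 : ℝ) / 2) = (√(2 * π))⁻¹ := by
    rw [neg_div, rpow_neg two_pi_pos.le, ← sqrt_eq_rpow]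
  rw [integral_prod (fun p : ℝ × ℝ => f p.1 p.2) hf]
  simp_rw [integral_stdGaussian, hconst, ← integral_const_mul]
  congr with x
  congr with z
  ring

theorem expectation_log_abs_mul_log_abs_gaussian_general {r q : ℝ} (hrq : r ^ 2 + q ^ 2 = 1) :
    ∫ x : ℝ, ∫ z : ℝ,
        log |x| * log |r * x + q * z|
          * ((2 * π) ^ (-(1 : ℝ) / 2) * exp (-x ^ 2 / 2))
          * ((2 * π) ^ (-(1 : ℝ) / 2) * exp (-z ^ 2 / 2))
      = (-(log 2 + eulerMascheroniConstant) / 2) ^ 2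
        + ∑' n : ℕ, ((2 : ℝ) ^ n * n !) ^ 2 * r ^ (2 * (n + 1)) / (2 * (n + 1))! := by
  have hint : Integrable (fun p : ℝ × ℝ => log |p.1| * log |r * p.1 + q * p.2|) stdGaussianPair :=
    memLp_log_abs_fst_stdGaussianPair.integrable_mul (memLp_log_abs_linear_stdGaussianPair hrq)
  rw [integral_integral_mul_gaussian_density (f := fun x z => log |x| * log |r * x + q * z|) hint,
    integral_log_abs_mul_log_abs_stdGaussianPair hrq]
  simp_rw [logCovCoeff, div_mul_eq_mul_div]

/-- For a bivariate Gaussian pair with standard normal marginals and correlation `r`,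
`E(ln|X| ln|Y|) = μ² + ∑_{k≥1} ν_{2k}² r^{2k}/(2k)!` where `μ = -(ln 2 + γ)/2` and
`ν_{2k} = 2^(k-1) (k-1)!` (the sum is written with `k = n+1`). -/
theorem expectation_log_abs_mul_log_abs_gaussian (r : ℝ) (hr : |r| < 1) :
    ∫ x : ℝ, ∫ z : ℝ,
        Real.log |x| * Real.log |r * x + Real.sqrt (1 - r ^ 2) * z|
          * ((2 * Real.pi) ^ (-(1 : ℝ)/2) * Real.exp (-x ^ 2 / 2))
          * ((2 * Real.pi) ^ (-(1 : ℝ)/2) * Real.exp (-z ^ 2 / 2))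
      = (-(Real.log 2 + Real.eulerMascheroniConstant) / 2) ^ 2
        + ∑' n : ℕ, ((2 : ℝ) ^ n * Nat.factorial n) ^ 2 * r ^ (2 * (n + 1))
            / Nat.factorial (2 * (n + 1)) := by
  have hr2 : 0 ≤ 1 - r ^ 2 := sub_nonneg.mpr ((sq_le_one_iff_abs_le_one r).mpr hr.le)
  exact expectation_log_abs_mul_log_abs_gaussian_general (by rw [sq_sqrt hr2, add_sub_cancel])
end

section
/- Let g(x) = (1/2) √(π/2) exp( −(1/4) e^z + z/2 ) where z = π x/√2 − γ and γ is the Euler–Mascheroni constant. Then the third moment satisfies ∫_ℝ x³ g(x) dx = −(28√2/π³) ζ(3), where ζ(3) = ∑_{n=1}^∞ 1/n³. In particular the distribution with density g is skewed to the left. -/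
open MeasureTheory Real

/-!
If `U` has the Gamma distribution with shape `1/2` and rate `1/4`, then `E[exp (t log U)]` is
`Γ(1/2 + t) / (Γ(1/2) (1/4)^t)`, so the cumulants of `log U` are the derivatives at `0` of
`log Γ(1/2 + t) - t log (1/4)`: the mean is `ψ(1/2) + log 4 = -γ` and the third cumulant, which is
the third central moment, is `ψ''(1/2) = -2 ∑ 1 / (m + 1/2)³ = -14 ζ(3)`. The density `g` is that of
the centered variable `(√2/π) (log U + γ)`, whence the factor `(√2/π)³ = 2√2/π³`.

The series for `ψ` comes from `ψ(x + 1) = ψ(x) + 1/x`: log-convexity of `Γ` makes `ψ` monotone,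
which forces `ψ(x + n) - ψ(y + n) → 0`, so `ψ(x) - ψ(y)` is the sum of all the increments
`1 / (y + m) - 1 / (x + m)`.
-/

open ProbabilityTheory Filter Topology Set

section Digamma

variable {x y : ℝ} {k : ℕ}

/-- The digamma function `ψ = Γ' / Γ` of a real variable, the analogue of `Complex.digamma`. -/
noncomputable def realDigamma : ℝ → ℝ := logDeriv Gamma

theorem hasDerivAt_log_Gamma (hx : 0 < x) :
    HasDerivAt (log ∘ Gamma) (realDigamma x) x :=
  have hΓ : DifferentiableAt ℝ Gamma x :=
    differentiableOn_Gamma_Ioi.differentiableAt (Ioi_mem_nhds hx)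
  hΓ.hasDerivAt.log (Gamma_pos_of_pos hx).ne'

theorem realDigamma_one_half :
    realDigamma (1 / 2) = -(eulerMascheroniConstant + 2 * log 2) := by
  rw [realDigamma, logDeriv_apply, hasDerivAt_Gamma_one_half.deriv, Gamma_one_half_eq]
  field_simp

theorem realDigamma_add_one (hx : 0 < x) : realDigamma (x + 1) = realDigamma x + 1 / x := by
  have h_shift : HasDerivAt (fun z ↦ log (Gamma (z + 1))) (realDigamma (x + 1)) x :=
    (hasDerivAt_log_Gamma (by positivity)).comp_add_const x 1
  have h_mul : HasDerivAt (fun z ↦ log (Gamma z) + log z) (realDigamma x + 1 / x) x := by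
    simpa using! (hasDerivAt_log_Gamma hx).add (hasDerivAt_log hx.ne')
  refine h_shift.unique (h_mul.congr_of_eventuallyEq ?_)
  filter_upwards [Ioi_mem_nhds hx] with z (hz : 0 < z)
  rw [Gamma_add_one hz.ne', log_mul hz.ne' (Gamma_pos_of_pos hz).ne', add_comm]

theorem realDigamma_add_natCast (hx : 0 < x) (n : ℕ) :
    realDigamma (x + n) = realDigamma x + ∑ m ∈ Finset.range n, 1 / (x + m) := by
  induction n with
  | zero => simp
  | succ n ih =>
    rw [Finset.sum_range_succ, ← add_assoc, ← ih, ← realDigamma_add_one (by positivity)]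
    push_cast
    rw [add_assoc]

theorem monotoneOn_realDigamma : MonotoneOn realDigamma (Ioi 0) :=
  (convexOn_log_Gamma.monotoneOn_deriv fun _ hx ↦ (hasDerivAt_log_Gamma hx).differentiableAt).congr
    fun _ hx ↦ (hasDerivAt_log_Gamma hx).deriv

theorem realDigamma_sub_le_sum (hx : 0 < x) (hy : 0 < y) (hxy : x ≤ y + k) :
    realDigamma x - realDigamma y ≤ ∑ j ∈ Finset.range k, 1 / (y + j) := by
  have h_mono := monotoneOn_realDigamma hx (show 0 < y + k by positivity) hxy
  rw [realDigamma_add_natCast hy] at h_mono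
  linarith

theorem tendsto_realDigamma_add_natCast_sub (hx : 0 < x) (hy : 0 < y) :
    Tendsto (fun n : ℕ ↦ realDigamma (x + n) - realDigamma (y + n)) atTop (𝓝 0) := by
  have h_sum : ∀ (z : ℝ) (k : ℕ),
      Tendsto (fun n : ℕ ↦ ∑ j ∈ Finset.range k, 1 / (z + n + j)) atTop (𝓝 0) := fun z k ↦ by
    have h_term (j : ℕ) : Tendsto (fun n : ℕ ↦ 1 / (z + n + j)) atTop (𝓝 0) :=
      tendsto_const_nhds.div_atTop <| tendsto_atTop_add_const_right _ _ <|
        tendsto_atTop_add_const_left _ _ tendsto_natCast_atTop_atTop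
    simpa using tendsto_finsetSum (Finset.range k) fun j _ ↦ h_term j
  obtain ⟨k, hk⟩ := exists_nat_ge (x - y)
  obtain ⟨l, hl⟩ := exists_nat_ge (y - x)
  refine tendsto_of_tendsto_of_tendsto_of_le_of_le (by simpa using (h_sum x l).neg) (h_sum y k)
    (fun n ↦ ?_) fun n ↦ realDigamma_sub_le_sum (by positivity) (by positivity) (by linarith)
  have h_le : realDigamma (y + n) - realDigamma (x + n) ≤ ∑ j ∈ Finset.range l, 1 / (x + n + j) :=
    realDigamma_sub_le_sum (by positivity) (by positivity) (by linarith)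
  simpa using neg_le_neg h_le

theorem hasSum_realDigamma_sub (hx : 0 < x) (hy : 0 < y) :
    HasSum (fun m : ℕ ↦ 1 / (y + m) - 1 / (x + m)) (realDigamma x - realDigamma y) := by
  wlog hyx : y ≤ x generalizing x y
  · simpa using (this hy hx (le_of_not_ge hyx)).neg
  refine (hasSum_iff_tendsto_nat_of_nonneg (fun m ↦ ?_) _).2 ?_
  · exact sub_nonneg.2 (one_div_le_one_div_of_le (by positivity) (by linarith))
  · have h_sum (n : ℕ) : ∑ m ∈ Finset.range n, (1 / (y + m) - 1 / (x + m))
        = realDigamma x - realDigamma y - (realDigamma (x + n) - realDigamma (y + n)) := by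
      rw [realDigamma_add_natCast hx, realDigamma_add_natCast hy, Finset.sum_sub_distrib]
      ring
    simp only [h_sum]
    simpa only [sub_zero] using (tendsto_realDigamma_add_natCast_sub hx hy).const_sub
      (realDigamma x - realDigamma y)

theorem summable_one_div_add_natCast_pow (x : ℝ) (hk : 1 < k) :
    Summable fun m : ℕ ↦ 1 / (x + m) ^ k := by
  have h := (summable_one_div_nat_add_rpow x k).2 (by exact_mod_cast hk)
  refine .of_norm (h.congr fun m ↦ ?_)
  rw [rpow_natCast, norm_div, norm_pow, norm_one, norm_eq_abs, add_comm]

theorem hasDerivAt_one_div_add_pow (k : ℕ) {c : ℝ} (hx : x + c ≠ 0) :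
    HasDerivAt (fun z ↦ 1 / (z + c) ^ k) (-(k : ℝ) / (x + c) ^ (k + 1)) x := by
  have h : HasDerivAt (fun z ↦ 1 / z ^ k) (-(k : ℝ) / (x + c) ^ (k + 1)) (x + c) := by
    have h_zpow := hasDerivAt_zpow (-k) (x + c) (Or.inl hx)
    simp only [zpow_neg, zpow_natCast, ← one_div] at h_zpow
    refine h_zpow.congr_deriv ?_
    rw [← neg_add', zpow_neg, ← Nat.cast_succ, zpow_natCast, div_eq_mul_inv]
    push_cast
    rfl
  exact h.comp_add_const x c

/- For `k = 1` the series `∑ 1 / (z + m) ^ k` converges only after subtracting constants `c m`. -/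
theorem hasDerivAt_tsum_one_div_add_pow_sub (hk : k ≠ 0) (hx : 0 < x) {c : ℕ → ℝ}
    (hc : Summable fun m : ℕ ↦ 1 / (x + m) ^ k - c m) :
    HasDerivAt (fun z ↦ ∑' m : ℕ, (1 / (z + m) ^ k - c m))
      (-(k : ℝ) * ∑' m : ℕ, 1 / (x + m) ^ (k + 1)) x := by
  have hx_mem : x ∈ Ioi (x / 2) := half_lt_self hx
  have h_bound : Summable fun m : ℕ ↦ k * (1 / (x / 2 + m) ^ (k + 1)) :=
    (summable_one_div_add_natCast_pow _ (by lia)).mul_left _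
  refine (hasDerivAt_tsum_of_isPreconnected (g := fun m z ↦ 1 / (z + m) ^ k - c m)
    (g' := fun m z ↦ -(k : ℝ) / (z + m) ^ (k + 1)) h_bound isOpen_Ioi isPreconnected_Ioi
    (fun m z (hz : x / 2 < z) ↦ ?_) (fun m z (hz : x / 2 < z) ↦ ?_) hx_mem hc hx_mem).congr_deriv ?_
  · have hz₀ : 0 < z := (half_pos hx).trans hz
    exact (hasDerivAt_one_div_add_pow k (by positivity)).sub_const _
  · have hz₀ : 0 < z := (half_pos hx).trans hz
    rw [norm_div, norm_neg, norm_of_nonneg (by positivity), norm_of_nonneg (by positivity),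
      mul_one_div]
    gcongr
  · simp only [← tsum_mul_left, mul_one_div]

theorem hasDerivAt_tsum_one_div_add_pow (hk : 1 < k) (hx : 0 < x) :
    HasDerivAt (fun z : ℝ ↦ ∑' m : ℕ, 1 / (z + m) ^ k)
      (-(k : ℝ) * ∑' m : ℕ, 1 / (x + m) ^ (k + 1)) x := by
  simpa using hasDerivAt_tsum_one_div_add_pow_sub (k := k) (by lia) hx (c := 0)
    (by simpa using summable_one_div_add_natCast_pow x hk)

theorem hasDerivAt_realDigamma (hx : 0 < x) :
    HasDerivAt realDigamma (∑' m : ℕ, 1 / (x + m) ^ 2) x := by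
  have h_series {z : ℝ} (hz : 0 < z) :
      HasSum (fun m : ℕ ↦ 1 / (z + m) ^ 1 - 1 / (1 + m)) (realDigamma 1 - realDigamma z) := by
    simpa using hasSum_realDigamma_sub one_pos hz
  have h := (hasDerivAt_tsum_one_div_add_pow_sub one_ne_zero hx (h_series hx).summable).const_sub
    (realDigamma 1)
  refine (h.congr_deriv (by simp)).congr_of_eventuallyEq ?_
  filter_upwards [Ioi_mem_nhds hx] with z hz
  rw [(h_series hz).tsum_eq, sub_sub_cancel]

theorem iteratedDeriv_succ_realDigamma (n : ℕ) (hx : 0 < x) :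
    iteratedDeriv (n + 1) realDigamma x
      = (-1) ^ n * (n + 1).factorial * ∑' m : ℕ, 1 / (x + m) ^ (n + 2) := by
  induction n generalizing x with
  | zero => simp [(hasDerivAt_realDigamma hx).deriv]
  | succ n ih =>
    have h_eq : iteratedDeriv (n + 1) realDigamma =ᶠ[𝓝 x]
        fun z ↦ (-1) ^ n * (n + 1).factorial * ∑' m : ℕ, 1 / (z + m) ^ (n + 2) := by
      filter_upwards [Ioi_mem_nhds hx] with z hz using ih hz
    rw [iteratedDeriv_succ, h_eq.deriv_eq,
      ((hasDerivAt_tsum_one_div_add_pow (k := n + 2) (by lia) hx).const_mul _).deriv,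
      Nat.factorial_succ (n + 1)]
    push_cast
    ring

theorem tsum_one_div_one_half_add_pow (hk : 1 < k) :
    ∑' m : ℕ, 1 / (1 / 2 + m : ℝ) ^ k = (2 ^ k - 1) * ∑' m : ℕ, 1 / (m + 1 : ℝ) ^ k := by
  have h_sum : Summable fun m : ℕ ↦ 1 / (m : ℝ) ^ k := summable_one_div_nat_pow.2 hk
  have h_even : ∑' m : ℕ, 1 / ((2 * m : ℕ) : ℝ) ^ k = (2 ^ k)⁻¹ * ∑' m : ℕ, 1 / (m : ℝ) ^ k := by
    rw [← tsum_mul_left]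
    congr with m
    push_cast
    rw [mul_pow]
    ring
  have h_odd : ∑' m : ℕ, 1 / ((2 * m + 1 : ℕ) : ℝ) ^ k
      = (2 ^ k)⁻¹ * ∑' m : ℕ, 1 / (1 / 2 + m : ℝ) ^ k := by
    rw [← tsum_mul_left]
    congr with m
    rw [show ((2 * m + 1 : ℕ) : ℝ) = 2 * (1 / 2 + m) by push_cast; ring, mul_pow]
    ring
  have h_shift : ∑' m : ℕ, 1 / (m : ℝ) ^ k = ∑' m : ℕ, 1 / (m + 1 : ℝ) ^ k := by
    rw [h_sum.tsum_eq_zero_add]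
    simp [(zero_lt_one.trans hk).ne']
  have h_split := tsum_even_add_odd (f := fun m : ℕ ↦ 1 / (m : ℝ) ^ k)
    (h_sum.comp_injective (i := (2 * ·)) fun m n h ↦ by simpa using h)
    (h_sum.comp_injective (i := (2 * · + 1)) fun m n h ↦ by simpa using h)
  rw [h_even, h_odd, h_shift, ← mul_add, inv_mul_eq_iff_eq_mul₀ (by positivity)] at h_split
  linear_combination h_split

end Digamma

section Cumulant

variable {Ω : Type*} {mΩ : MeasurableSpace Ω} {X : Ω → ℝ} {μ : Measure Ω}

theorem iteratedDeriv_three_cgf {v : ℝ} (h : v ∈ interior (integrableExpSet X μ)) :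
    iteratedDeriv 3 (cgf X μ) v
      = μ[fun ω ↦ X ω ^ 3 * exp (v * X ω)] / mgf X μ v
        - 3 * deriv (cgf X μ) v * (μ[fun ω ↦ X ω ^ 2 * exp (v * X ω)] / mgf X μ v)
        + 2 * deriv (cgf X μ) v ^ 3 := by
  by_cases hμ : μ = 0
  · simp [hμ]
  have h_mgf : mgf X μ v ≠ 0 := (mgf_pos' hμ (interior_subset (s := integrableExpSet X μ) h)).ne'
  have h_eq : iteratedDeriv 2 (cgf X μ) =ᶠ[𝓝 v] fun u ↦
      μ[fun ω ↦ X ω ^ 2 * exp (u * X ω)] / mgf X μ u - deriv (cgf X μ) u ^ 2 := by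
    filter_upwards [isOpen_interior.mem_nhds h] with u hu using iteratedDeriv_two_cgf hu
  have h_deriv : HasDerivAt (deriv (cgf X μ)) (iteratedDeriv 2 (cgf X μ) v) v := by
    rw [iteratedDeriv_succ, iteratedDeriv_one]
    exact (analyticAt_cgf h).deriv.differentiableAt.hasDerivAt
  have h_quot := ((hasDerivAt_integral_pow_mul_exp_real h 2).fun_div (hasDerivAt_mgf h)
    h_mgf).fun_sub (h_deriv.fun_pow 2)
  rw [iteratedDeriv_succ, h_eq.deriv_eq, h_quot.deriv, iteratedDeriv_two_cgf h, deriv_cgf h]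
  simp only [Nat.reduceAdd, Nat.add_one_sub_one, Nat.cast_ofNat, pow_one]
  generalize ∫ ω, X ω * exp (v * X ω) ∂μ = m₁, ∫ ω, X ω ^ 2 * exp (v * X ω) ∂μ = m₂,
    ∫ ω, X ω ^ 3 * exp (v * X ω) ∂μ = m₃
  field_simp
  ring

theorem centralMoment_three [IsProbabilityMeasure μ] (hX : MemLp X 3 μ) :
    centralMoment X 3 μ = μ[X ^ 3] - 3 * μ[X] * μ[X ^ 2] + 2 * μ[X] ^ 3 := by
  have h_one : Integrable X μ := hX.integrable (by norm_num)
  have h_two : Integrable (fun ω ↦ X ω ^ 2) μ := (hX.mono_exponent (by norm_num)).integrable_sq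
  have h_three : Integrable (fun ω ↦ X ω ^ 3) μ :=
    (integrable_norm_iff (hX.1.pow 3)).1 (by simpa using hX.integrable_norm_pow three_ne_zero)
  set m := μ[X]
  calc centralMoment X 3 μ
      = ∫ ω, (X ω ^ 3 - 3 * m * X ω ^ 2 + 3 * m ^ 2 * X ω - m ^ 3) ∂μ := by
        simp only [centralMoment, Pi.pow_apply, Pi.sub_apply]
        congr with ω
        ring
    _ = ∫ ω, X ω ^ 3 ∂μ - 3 * m * ∫ ω, X ω ^ 2 ∂μ + 3 * m ^ 2 * m - m ^ 3 := by
        rw [integral_sub (by fun_prop) (by fun_prop), integral_add (by fun_prop) (by fun_prop),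
          integral_sub (by fun_prop) (by fun_prop), integral_const_mul, integral_const_mul]
        simp [m]
    _ = _ := by
        simp only [Pi.pow_apply]
        ring

theorem iteratedDeriv_three_cgf_zero [IsProbabilityMeasure μ]
    (h : 0 ∈ interior (integrableExpSet X μ)) :
    iteratedDeriv 3 (cgf X μ) 0 = centralMoment X 3 μ := by
  rw [centralMoment_three (memLp_of_mem_interior_integrableExpSet h 3), iteratedDeriv_three_cgf h,
    deriv_cgf_zero h]
  simp

end Cumulant

section LogGamma

variable {E : Type*} [NormedAddCommGroup E] [NormedSpace ℝ E] {a r t : ℝ}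

theorem integral_gammaMeasure (ha : 0 < a) (hr : 0 < r) (f : ℝ → E) :
    ∫ u, f u ∂gammaMeasure a r
      = ∫ u in Ioi 0, (r ^ a / Gamma a * u ^ (a - 1) * exp (-(r * u))) • f u := by
  have h_meas : Measurable (gammaPDF a r) := (measurable_gammaPDFReal a r).ennreal_ofReal
  rw [gammaMeasure, integral_withDensity_eq_integral_toReal_smul h_meas
    (ae_of_all _ fun _ ↦ ENNReal.ofReal_lt_top), ← integral_Ici_eq_integral_Ioi,
    ← integral_indicator measurableSet_Ici]
  congr with u
  rw [gammaPDF, ENNReal.toReal_ofReal (gammaPDFReal_nonneg ha hr u), gammaPDFReal]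
  by_cases hu : 0 ≤ u <;> simp [hu]

theorem mgf_log_gammaMeasure (ha : 0 < a) (hr : 0 < r) (ht : -a < t) :
    mgf log (gammaMeasure a r) t = Gamma (a + t) / (Gamma a * r ^ t) := by
  have h_integrand {u : ℝ} (hu : u ∈ Ioi 0) :
      r ^ a / Gamma a * u ^ (a - 1) * exp (-(r * u)) * exp (t * log u)
        = r ^ a / Gamma a * (u ^ (a + t - 1) * exp (-(r * u))) := by
    rw [mul_comm t, ← rpow_def_of_pos hu, add_sub_right_comm, rpow_add hu]
    ring
  simp only [mgf, integral_gammaMeasure ha hr, smul_eq_mul]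
  rw [setIntegral_congr_fun measurableSet_Ioi @h_integrand, integral_const_mul,
    integral_rpow_mul_exp_neg_mul_Ioi (by linarith) hr, one_div, inv_rpow hr.le, rpow_add hr]
  field_simp

theorem Ioi_subset_integrableExpSet_log_gammaMeasure (ha : 0 < a) (hr : 0 < r) :
    Ioi (-a) ⊆ integrableExpSet log (gammaMeasure a r) := fun t (ht : -a < t) ↦ by
  have h_pos : 0 < mgf log (gammaMeasure a r) t := by
    have := Gamma_pos_of_pos ha
    have := Gamma_pos_of_pos (neg_lt_iff_pos_add'.1 ht)
    rw [mgf_log_gammaMeasure ha hr ht]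
    positivity
  exact .of_integral_ne_zero h_pos.ne'

theorem zero_mem_interior_integrableExpSet_log_gammaMeasure (ha : 0 < a) (hr : 0 < r) :
    0 ∈ interior (integrableExpSet log (gammaMeasure a r)) :=
  interior_maximal (Ioi_subset_integrableExpSet_log_gammaMeasure ha hr) isOpen_Ioi
    (neg_lt_zero.2 ha)

theorem cgf_log_gammaMeasure (ha : 0 < a) (hr : 0 < r) (ht : -a < t) :
    cgf log (gammaMeasure a r) t = log (Gamma (a + t)) - log (Gamma a) - t * log r := by
  have hΓ := (Gamma_pos_of_pos ha).ne'
  have hΓt := (Gamma_pos_of_pos (neg_lt_iff_pos_add'.1 ht)).ne'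
  rw [cgf, mgf_log_gammaMeasure ha hr ht, log_div hΓt (by positivity), log_mul hΓ (by positivity),
    log_rpow hr, sub_sub]

theorem deriv_cgf_log_gammaMeasure (ha : 0 < a) (hr : 0 < r) (ht : -a < t) :
    deriv (cgf log (gammaMeasure a r)) t = realDigamma (a + t) - log r := by
  have h_eq : cgf log (gammaMeasure a r) =ᶠ[𝓝 t]
      fun s ↦ log (Gamma (a + s)) - log (Gamma a) - s * log r := by
    filter_upwards [Ioi_mem_nhds ht] with s hs using cgf_log_gammaMeasure ha hr hs
  have h_logΓ : HasDerivAt (fun s ↦ log (Gamma (a + s))) (realDigamma (a + t)) t :=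
    (hasDerivAt_log_Gamma (neg_lt_iff_pos_add'.1 ht)).comp_const_add a t
  rw [h_eq.deriv_eq,
    ((h_logΓ.sub_const _).fun_sub ((hasDerivAt_id' t).mul_const (log r))).deriv, one_mul]

theorem integral_log_gammaMeasure (ha : 0 < a) (hr : 0 < r) :
    ∫ u, log u ∂gammaMeasure a r = realDigamma a - log r := by
  have := isProbabilityMeasure_gammaMeasure ha hr
  have h := deriv_cgf_zero (zero_mem_interior_integrableExpSet_log_gammaMeasure ha hr)
  rw [deriv_cgf_log_gammaMeasure ha hr (neg_lt_zero.2 ha)] at h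
  simpa using h.symm

theorem iteratedDeriv_add_two_cgf_log_gammaMeasure (ha : 0 < a) (hr : 0 < r) (n : ℕ) :
    iteratedDeriv (n + 2) (cgf log (gammaMeasure a r)) 0 = iteratedDeriv (n + 1) realDigamma a := by
  have h_eq : deriv (cgf log (gammaMeasure a r)) =ᶠ[𝓝 0] fun t ↦ realDigamma (a + t) - log r := by
    filter_upwards [Ioi_mem_nhds (neg_lt_zero.2 ha)] with t ht
      using deriv_cgf_log_gammaMeasure ha hr ht
  have h_shift : iteratedDeriv (n + 1) (fun t ↦ realDigamma (a + t) - log r)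
      = iteratedDeriv (n + 1) fun t ↦ realDigamma (a + t) := by
    rw [iteratedDeriv_succ', iteratedDeriv_succ',
      deriv_sub_const_fun (f := fun t ↦ realDigamma (a + t))]
  rw [iteratedDeriv_succ', h_eq.iteratedDeriv_eq, h_shift, iteratedDeriv_comp_const_add]
  simp

theorem centralMoment_three_log_gammaMeasure (ha : 0 < a) (hr : 0 < r) :
    centralMoment log 3 (gammaMeasure a r) = -2 * ∑' m : ℕ, 1 / (a + m) ^ 3 := by
  have := isProbabilityMeasure_gammaMeasure ha hr
  rw [← iteratedDeriv_three_cgf_zero (zero_mem_interior_integrableExpSet_log_gammaMeasure ha hr),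
    iteratedDeriv_add_two_cgf_log_gammaMeasure ha hr, iteratedDeriv_succ_realDigamma 1 ha]
  simp

theorem integral_comp_log_gammaMeasure (ha : 0 < a) (hr : 0 < r) (f : ℝ → E) :
    ∫ u, f (log u) ∂gammaMeasure a r
      = ∫ z, (r ^ a / Gamma a * exp (a * z - r * exp z)) • f z := by
  rw [integral_gammaMeasure ha hr, ← range_exp, ← image_univ,
    integral_image_eq_integral_abs_deriv_smul .univ
      (fun z _ ↦ (hasDerivAt_exp z).hasDerivWithinAt) exp_injective.injOn, setIntegral_univ]
  congr with z
  rw [abs_exp, log_exp, ← exp_mul, smul_smul,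
    show a * z - r * exp z = z + z * (a - 1) + -(r * exp z) by ring, exp_add, exp_add]
  congr 1
  ring

theorem integral_comp_log_add_div_gammaMeasure (ha : 0 < a) (hr : 0 < r) {b : ℝ} (hb : 0 < b)
    (c : ℝ) (f : ℝ → E) :
    ∫ u, f ((log u + c) / b) ∂gammaMeasure a r
      = ∫ x, (b * (r ^ a / Gamma a) * exp (a * (b * x - c) - r * exp (b * x - c))) • f x := by
  let F : ℝ → E := fun z ↦ (r ^ a / Gamma a * exp (a * z - r * exp z)) • f ((z + c) / b)
  have h_affine : ∫ x, F (b * x - c) = b⁻¹ • ∫ z, F z := by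
    rw [Measure.integral_comp_mul_left (fun z ↦ F (z - c)) b, integral_sub_right_eq_self,
      abs_of_pos (inv_pos.2 hb)]
  calc ∫ u, f ((log u + c) / b) ∂gammaMeasure a r
      = ∫ z, F z := integral_comp_log_gammaMeasure ha hr fun z ↦ f ((z + c) / b)
    _ = ∫ x, b • F (b * x - c) := by
      rw [integral_smul, h_affine, smul_inv_smul₀ hb.ne']
    _ = _ := by
      congr with x
      simp only [F, sub_add_cancel, mul_div_cancel_left₀ x hb.ne', smul_smul, mul_assoc]

end LogGamma

theorem integral_log_gammaMeasure_one_half_one_fourth :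
    ∫ u, log u ∂gammaMeasure (1 / 2) (1 / 4) = -eulerMascheroniConstant := by
  have h_log : log (1 / 4) = -(2 * log 2) := by
    rw [one_div, log_inv, show (4 : ℝ) = 2 ^ 2 by norm_num, log_pow, Nat.cast_ofNat]
  rw [integral_log_gammaMeasure (by norm_num) (by norm_num), realDigamma_one_half, h_log]
  ring

theorem one_fourth_rpow_one_half_div_Gamma_one_half :
    (1 / 4 : ℝ) ^ (1 / 2 : ℝ) / Gamma (1 / 2) = 1 / (2 * √π) := by
  rw [Gamma_one_half_eq, ← sqrt_eq_rpow, show (1 / 4 : ℝ) = (1 / 2) ^ 2 by norm_num,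
    sqrt_sq (by norm_num), div_div]

theorem integral_mul_doublyExponential (c : ℝ) (f : ℝ → ℝ) :
    ∫ x, f x * (1 / 2 * √(π / 2) * exp (-(1 / 4) * exp (π * x / √2 - c) + (π * x / √2 - c) / 2))
      = ∫ u, f ((log u + c) / (π / √2)) ∂gammaMeasure (1 / 2) (1 / 4) := by
  have h_norm : π / √2 * (1 / (2 * √π)) = 1 / 2 * √(π / 2) := by
    rw [sqrt_div pi_nonneg]
    field_simp
    rw [sq_sqrt pi_nonneg]
  rw [integral_comp_log_add_div_gammaMeasure (by norm_num) (by norm_num) (by positivity),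
    one_fourth_rpow_one_half_div_Gamma_one_half, h_norm]
  congr with x
  rw [smul_eq_mul, mul_comm, mul_div_right_comm]
  congr 3
  ring

/-- The third moment of the doubly exponential density
`g(x) = (1/2)√(π/2) exp(-(1/4)e^z + z/2)`, `z = πx/√2 - γ`, equals `-(28√2/π³) ζ(3)`,
where `ζ(3) = ∑_{n≥1} 1/n³`. -/
theorem gumbel_density_third_moment :
    ∫ x : ℝ, x ^ 3 * ((1 / 2) * Real.sqrt (Real.pi / 2)
        * Real.exp (-(1 / 4) * Real.exp (Real.pi * x / Real.sqrt 2
            - Real.eulerMascheroniConstant)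
          + (Real.pi * x / Real.sqrt 2 - Real.eulerMascheroniConstant) / 2))
      = -(28 * Real.sqrt 2 / Real.pi ^ 3) * ∑' n : ℕ, 1 / ((n : ℝ) + 1) ^ 3 := by
  let μ : Measure ℝ := gammaMeasure (1 / 2) (1 / 4)
  have h_mean : ∫ u, log u ∂μ = -eulerMascheroniConstant :=
    integral_log_gammaMeasure_one_half_one_fourth
  calc _ = ∫ u, ((log u + eulerMascheroniConstant) / (π / √2)) ^ 3 ∂μ :=
        integral_mul_doublyExponential eulerMascheroniConstant (· ^ 3)
    _ = (√2 / π) ^ 3 * centralMoment log 3 μ := by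
        rw [centralMoment, h_mean, ← integral_const_mul]
        congr with u
        simp only [Pi.pow_apply, Pi.sub_apply]
        field_simp
        ring
    _ = _ := by
        rw [centralMoment_three_log_gammaMeasure (by norm_num) (by norm_num),
          tsum_one_div_one_half_add_pow (by norm_num), div_pow, pow_succ √2, sq_sqrt zero_le_two]
        ring
end
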